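/- Let (X, d, T) be a topological dynamical system. Then for every δ ∈ (0,1), the upper metric mean dimension satisfies mdim̄_M(X,d,T) = limsup_{ε→0} (1/log(1/ε)) · sup_{μ ∈ E_T(X)} h̲_μ^K(ε, δ), where h̲_μ^K denotes the lower Katok entropy. -/

import Mathlib

open Filter MeasureTheory Set Topology

variable {X : Type*}

/-- The dynamical (Bowen) metric `d_n(x,y) = max_{0 ≤ k ≤ n-1} d(T^k x, T^k y)`. -/
noncomputable def dynDist [MetricSpace X] (T : X → X) (n : ℕ) (x y : X) : ℝ :=
  ⨆ k ∈ Finset.range n, dist (T^[k] x) (T^[k] y)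

/-- The open dynamical ball `B_n(x, ε) = {y : d_n(x,y) < ε}`. -/
def dynBall [MetricSpace X] (T : X → X) (n : ℕ) (x : X) (ε : ℝ) : Set X :=
  {y | dynDist T n x y < ε}

/-- `s_n(K, ε)`: the maximal cardinality of an `(n,ε)`-separated subset of `K`. -/
noncomputable def sepNum [MetricSpace X] (T : X → X) (n : ℕ) (K : Set X) (ε : ℝ) : ℕ :=
  sSup {m | ∃ E : Finset X, ↑E ⊆ K ∧
    (∀ x ∈ E, ∀ y ∈ E, x ≠ y → ε < dynDist T n x y) ∧ E.card = m}

/-- `S(K, ε) = limsup_n (1/n) log s_n(K, ε)`. -/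
noncomputable def sepEnt [MetricSpace X] (T : X → X) (K : Set X) (ε : ℝ) : EReal :=
  limsup (fun n : ℕ => ((Real.log (sepNum T n K ε) / n : ℝ) : EReal)) atTop

/-- `r_n(K, ε)`: the minimal cardinality of an `(n,ε)`-spanning set for `K`. -/
noncomputable def spanNum [MetricSpace X] (T : X → X) (n : ℕ) (K : Set X) (ε : ℝ) : ℕ :=
  sInf {m | ∃ F : Finset X, (∀ x ∈ K, ∃ y ∈ F, dynDist T n x y ≤ ε) ∧ F.card = m}

/-- `R(K, ε) = limsup_n (1/n) log r_n(K, ε)`. -/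
noncomputable def spanEnt [MetricSpace X] (T : X → X) (K : Set X) (ε : ℝ) : EReal :=
  limsup (fun n : ℕ => ((Real.log (spanNum T n K ε) / n : ℝ) : EReal)) atTop

/-- Upper metric mean dimension. -/
noncomputable def mdimUpper [MetricSpace X] (T : X → X) : EReal :=
  limsup (fun ε : ℝ => sepEnt T univ ε / ((Real.log (1 / ε) : ℝ) : EReal)) (𝓝[>] (0:ℝ))

/-- Lower metric mean dimension. -/
noncomputable def mdimLower [MetricSpace X] (T : X → X) : EReal :=
  liminf (fun ε : ℝ => sepEnt T univ ε / ((Real.log (1 / ε) : ℝ) : EReal)) (𝓝[>] (0:ℝ))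

/-- The ergodic `T`-invariant Borel probability measures. -/
def ergodicMeasures [MeasurableSpace X] (T : X → X) : Set (Measure X) :=
  {μ | IsProbabilityMeasure μ ∧ Ergodic T μ}

/-- `U` is a finite open cover of `X`. -/
def IsFiniteOpenCover [TopologicalSpace X] (U : Finset (Set X)) : Prop :=
  (∀ V ∈ U, IsOpen V) ∧ ⋃₀ (U : Set (Set X)) = univ

/-- The cover `U^n = ⋁_{i=0}^{n-1} T^{-i} U`. -/
def dynRefine (T : X → X) (U : Finset (Set X)) (n : ℕ) : Set (Set X) :=
  {V | ∃ f : Fin n → Set X, (∀ i, f i ∈ U) ∧ V = ⋂ i : Fin n, T^[(i : ℕ)] ⁻¹' f i}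

/-- `N(C)`: the minimal cardinality of a subcover of `C`. -/
noncomputable def coverNum (C : Set (Set X)) : ℕ :=
  sInf {m | ∃ F : Finset (Set X), ↑F ⊆ C ∧ ⋃₀ (F : Set (Set X)) = univ ∧ F.card = m}

/-- `N_μ(U^n, δ)`: minimal number of members of `U^n` needed to cover a set of measure ≥ δ. -/
noncomputable def shapiraNum [MeasurableSpace X] (T : X → X) (μ : Measure X)
    (U : Finset (Set X)) (n : ℕ) (δ : ℝ) : ℕ :=
  sInf {m | ∃ F : Finset (Set X), ↑F ⊆ dynRefine T U n ∧
    ENNReal.ofReal δ ≤ μ (⋃₀ (F : Set (Set X))) ∧ F.card = m}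

/-- Shapira's entropy `h_μ^S(U, δ) = limsup_n (1/n) log N_μ(U^n, δ)`. -/
noncomputable def shapiraEnt [MeasurableSpace X] (T : X → X) (μ : Measure X)
    (U : Finset (Set X)) (δ : ℝ) : EReal :=
  limsup (fun n : ℕ => ((Real.log (shapiraNum T μ U n δ) / n : ℝ) : EReal)) atTop

/-- `N_μ^δ(n, ε)`: smallest number of open `(n,ε)`-dynamical balls whose union has
measure `> δ`. -/
noncomputable def katokNum [MetricSpace X] [MeasurableSpace X] (T : X → X) (μ : Measure X)
    (n : ℕ) (ε δ : ℝ) : ℕ :=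
  sInf {m | ∃ F : Finset X, ENNReal.ofReal δ < μ (⋃ x ∈ F, dynBall T n x ε) ∧ F.card = m}

/-- Katok's entropy `h_μ^K(ε, δ) = limsup_n (1/n) log N_μ^δ(n, ε)`. -/
noncomputable def katokEnt [MetricSpace X] [MeasurableSpace X] (T : X → X) (μ : Measure X)
    (ε δ : ℝ) : EReal :=
  limsup (fun n : ℕ => ((Real.log (katokNum T μ n ε δ) / n : ℝ) : EReal)) atTop

/-- Lower Katok entropy `h̲_μ^K(ε, δ) = liminf_n (1/n) log N_μ^δ(n, ε)`. -/
noncomputable def katokEntLower [MetricSpace X] [MeasurableSpace X] (T : X → X) (μ : Measure X)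
    (ε δ : ℝ) : EReal :=
  liminf (fun n : ℕ => ((Real.log (katokNum T μ n ε δ) / n : ℝ) : EReal)) atTop

/-- `Ñ_μ^δ(n, ε)`: smallest number of sets of `d_n`-diameter ≤ ε whose union has
measure `> δ`. -/
noncomputable def katokNumTilde [MetricSpace X] [MeasurableSpace X] (T : X → X) (μ : Measure X)
    (n : ℕ) (ε δ : ℝ) : ℕ :=
  sInf {m | ∃ F : Finset (Set X), (∀ A ∈ F, ∀ x ∈ A, ∀ y ∈ A, dynDist T n x y ≤ ε) ∧
    ENNReal.ofReal δ < μ (⋃₀ (F : Set (Set X))) ∧ F.card = m}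

/-- Brin–Katok local entropy `h_μ^{BK}(x, ε) = limsup_n -(1/n) log μ(B_n(x, ε))`. -/
noncomputable def brinKatok [MetricSpace X] [MeasurableSpace X] (T : X → X) (μ : Measure X)
    (x : X) (ε : ℝ) : EReal :=
  limsup (fun n : ℕ => -(ENNReal.log (μ (dynBall T n x ε))) / (n : EReal)) atTop

/-- Lower Brin–Katok local entropy `h̲_μ^{BK}(x, ε) = liminf_n -(1/n) log μ(B_n(x, ε))`. -/
noncomputable def brinKatokLower [MetricSpace X] [MeasurableSpace X] (T : X → X) (μ : Measure X)
    (x : X) (ε : ℝ) : EReal :=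
  liminf (fun n : ℕ => -(ENNReal.log (μ (dynBall T n x ε))) / (n : EReal)) atTop

/-- Local entropy function `h_d(x, ε) = inf { S(K, ε) : K closed neighborhood of x }`. -/
noncomputable def locEnt [MetricSpace X] (T : X → X) (x : X) (ε : ℝ) : EReal :=
  ⨅ K ∈ {K : Set X | IsClosed K ∧ K ∈ 𝓝 x}, sepEnt T K ε

/-- Local spanning entropy `h̃_d(x, ε) = inf { R(K, ε) : K closed neighborhood of x }`. -/
noncomputable def locSpanEnt [MetricSpace X] (T : X → X) (x : X) (ε : ℝ) : EReal :=
  ⨅ K ∈ {K : Set X | IsClosed K ∧ K ∈ 𝓝 x}, spanEnt T K ε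

/-- `U_x^n`: the union of all cells of `U^n` containing `x`. -/
def dynCoverCell (T : X → X) (U : Finset (Set X)) (n : ℕ) (x : X) : Set X :=
  ⋃₀ {V | V ∈ dynRefine T U n ∧ x ∈ V}

/-!
A code for orbit segments assigns to each point a random word, which describes an initial segment
of its orbit up to an error `ε`. The proof compares both sides of the formula with the entropy of
an invariant measure at scale `ε`, defined here as the infimal expected cost per step of a code
whose word probabilities depend continuously on the point (`codeEntropy`). Words are charged
`-log` of a subprobability weight, so a code describing `n` steps costs on average at least
`log s_n` over an `(n, ε)`-separated set of cardinality `s_n`. Averaging over the orbit segments of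
such sets and passing to a weak limit gives an invariant measure whose code entropy is at least
`S(X, ε)`. Continuity makes code entropy upper semicontinuous in the measure, and it is affine, so
it is maximal at an extreme point, that is, at an ergodic measure. For an ergodic measure, few
dynamical balls of large order `n` cover a set of positive measure; pulled back along the orbit
they cover almost everything, and spelling out a point by such balls is a code of cost at most the
lower Katok entropy per step. The opposite inequality holds because a maximal separated set spans.
The factors `2` lost in `ε` disappear after division by `log (1 / ε)`.
-/

section DynDist

variable [MetricSpace X] {T : X → X} {n : ℕ} {x y : X} {r : ℝ}

lemma dist_le_dynDist {k : ℕ} (hk : k < n) :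
    dist (T^[k] x) (T^[k] y) ≤ dynDist T n x y := by
  have hbdd : BddAbove
      (range fun k : ℕ => ⨆ (_ : k ∈ Finset.range n), dist (T^[k] x) (T^[k] y)) := by
    refine ⟨∑ j ∈ Finset.range n, dist (T^[j] x) (T^[j] y), forall_mem_range.2 fun j => ?_⟩
    exact Real.iSup_le (fun hj => Finset.single_le_sum
      (f := fun j => dist (T^[j] x) (T^[j] y)) (fun _ _ => dist_nonneg) hj)
      (Finset.sum_nonneg fun _ _ => dist_nonneg)
  have : Nonempty (k ∈ Finset.range n) := ⟨Finset.mem_range.2 hk⟩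
  exact ciSup_const.symm.le.trans (le_ciSup hbdd k)

lemma dynDist_le (hr : 0 ≤ r) (h : ∀ k < n, dist (T^[k] x) (T^[k] y) ≤ r) :
    dynDist T n x y ≤ r :=
  Real.iSup_le (fun k => Real.iSup_le (fun hk => h k (Finset.mem_range.1 hk)) hr) hr

lemma exists_lt_dist_of_lt_dynDist (hr : 0 ≤ r) (h : r < dynDist T n x y) :
    ∃ k < n, r < dist (T^[k] x) (T^[k] y) := by
  contrapose! h
  exact dynDist_le hr h

lemma dynDist_lt_iff (hr : 0 < r) :
    dynDist T n x y < r ↔ ∀ k < n, dist (T^[k] x) (T^[k] y) < r := by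
  refine ⟨fun h k hk => (dist_le_dynDist hk).trans_lt h, fun h => ?_⟩
  rcases Nat.eq_zero_or_pos n with rfl | hn
  · exact (dynDist_le le_rfl (by simp)).trans_lt hr
  · obtain ⟨k, hk, hmax⟩ := Finset.exists_max_image (Finset.range n)
      (fun k => dist (T^[k] x) (T^[k] y)) ⟨0, Finset.mem_range.2 hn⟩
    exact (dynDist_le dist_nonneg fun j hj => hmax j (Finset.mem_range.2 hj)).trans_lt
      (h k (Finset.mem_range.1 hk))

lemma dynDist_comm (T : X → X) (n : ℕ) (x y : X) : dynDist T n x y = dynDist T n y x := by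
  simp only [dynDist, dist_comm]

lemma mem_dynBall_self (hr : 0 < r) : x ∈ dynBall T n x r :=
  (dynDist_lt_iff hr).2 fun k _ => by simpa using hr

lemma isOpen_dynBall (hT : Continuous T) (n : ℕ) (x : X) (hr : 0 < r) :
    IsOpen (dynBall T n x r) := by
  have : dynBall T n x r = ⋂ k ∈ Finset.range n, {y | dist (T^[k] x) (T^[k] y) < r} := by
    ext y
    simp [dynBall, dynDist_lt_iff hr]
  rw [this]
  exact isOpen_biInter_finset fun k _ =>
    isOpen_lt (continuous_const.dist (hT.iterate k)) continuous_const

end DynDist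

/-- A set of points whose orbits are indistinguishable, up to an error `ε`, for `n` steps. -/
def IsTile [PseudoMetricSpace X] (T : X → X) (ε : ℝ) (n : ℕ) (O : Set X) : Prop :=
  ∀ x ∈ O, ∀ y ∈ O, ∀ k < n, dist (T^[k] x) (T^[k] y) ≤ ε

namespace IsTile

variable [PseudoMetricSpace X] {T : X → X} {ε : ℝ} {m n : ℕ} {O O' : Set X}

lemma mono_length (h : IsTile T ε n O) (hmn : m ≤ n) : IsTile T ε m O :=
  fun x hx y hy k hk => h x hx y hy k (hk.trans_le hmn)

lemma subset (h : IsTile T ε n O) (hO : O' ⊆ O) : IsTile T ε n O' :=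
  fun x hx y hy => h x (hO hx) y (hO hy)

lemma inter_preimage (h : IsTile T ε m O) (h' : IsTile T ε n O') :
    IsTile T ε (m + n) (O ∩ T^[m] ⁻¹' O') := by
  rintro x ⟨hx, hx'⟩ y ⟨hy, hy'⟩ k hk
  rcases lt_or_ge k m with hlt | hge
  · exact h x hx y hy k hlt
  · obtain ⟨j, rfl⟩ := Nat.exists_eq_add_of_le' hge
    simp only [Function.iterate_add_apply]
    exact h' _ hx' _ hy' j (by omega)

end IsTile

/-- A randomized code for orbit segments of `T`: the point `x` is encoded by the word `i` with
probability `prob i x`. The word `i` describes the first `len i` points of the orbit up to an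
error `ε`, and costs `-log (weight i)`; since the weights are subprobabilities, this is the cost
of an efficient code. The probabilities depend continuously on the point. -/
structure OrbitCode [PseudoMetricSpace X] (T : X → X) (ε : ℝ) where
  Word : Type
  [fintypeWord : Fintype Word]
  prob : Word → X → ℝ
  weight : Word → ℝ
  len : Word → ℕ
  continuous_prob : ∀ i, Continuous (prob i)
  prob_nonneg : ∀ i x, 0 ≤ prob i x
  sum_prob : ∀ x, ∑ i, prob i x = 1
  weight_pos : ∀ i, 0 < weight i
  sum_weight_le_one : ∑ i, weight i ≤ 1
  isTile : ∀ i, IsTile T ε (len i) {x | 0 < prob i x}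

namespace OrbitCode

attribute [instance] fintypeWord

variable [PseudoMetricSpace X] {T : X → X} {ε : ℝ}

/-- The expected value at `x` of a function `v` of the random word encoding `x`. -/
noncomputable def average (c : OrbitCode T ε) (v : c.Word → ℝ) (x : X) : ℝ :=
  ∑ i, c.prob i x * v i

/-- The expected cost of the random word encoding `x`. -/
noncomputable def cost (c : OrbitCode T ε) : X → ℝ :=
  c.average fun i => -Real.log (c.weight i)

/-- The expected length of the random word encoding `x`. -/
noncomputable def meanLen (c : OrbitCode T ε) : X → ℝ :=
  c.average fun i => c.len i

section Basic

variable (c : OrbitCode T ε)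

lemma continuous_average (v : c.Word → ℝ) : Continuous (c.average v) :=
  continuous_finsetSum _ fun i _ => (c.continuous_prob i).mul_const _

lemma continuous_cost : Continuous c.cost := c.continuous_average _

lemma average_const (a : ℝ) (x : X) : c.average (fun _ => a) x = a := by
  rw [average, ← Finset.sum_mul, c.sum_prob, one_mul]

lemma average_mono {v w : c.Word → ℝ} (h : ∀ i, v i ≤ w i) (x : X) :
    c.average v x ≤ c.average w x :=
  Finset.sum_le_sum fun i _ => mul_le_mul_of_nonneg_left (h i) (c.prob_nonneg i x)

lemma average_add (v w : c.Word → ℝ) (x : X) :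
    c.average (fun i => v i + w i) x = c.average v x + c.average w x := by
  simp only [average, mul_add, Finset.sum_add_distrib]

lemma prob_le_one (i : c.Word) (x : X) : c.prob i x ≤ 1 := by
  rw [← c.sum_prob x]
  exact Finset.single_le_sum (f := (c.prob · x)) (fun j _ => c.prob_nonneg j x) (Finset.mem_univ i)

lemma weight_le_one (i : c.Word) : c.weight i ≤ 1 :=
  (Finset.single_le_sum (fun j _ => (c.weight_pos j).le) (Finset.mem_univ i)).trans
    c.sum_weight_le_one

lemma cost_nonneg (x : X) : 0 ≤ c.cost x :=
  Finset.sum_nonneg fun i _ => mul_nonneg (c.prob_nonneg i x) <|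
    neg_nonneg.2 <| Real.log_nonpos (c.weight_pos i).le (c.weight_le_one i)

lemma average_const_mul (a : ℝ) (v : c.Word → ℝ) (x : X) :
    c.average (fun i => a * v i) x = a * c.average v x := by
  simp only [average, Finset.mul_sum, mul_left_comm]

end Basic

section Separated

variable (c : OrbitCode T ε) {n : ℕ} {E : Finset X}

lemma sum_prob_le_one_of_separated (hlen : ∀ i, n ≤ c.len i)
    (hE : ∀ x ∈ E, ∀ y ∈ E, x ≠ y → ∃ k < n, ε < dist (T^[k] x) (T^[k] y)) (i : c.Word) :
    ∑ x ∈ E, c.prob i x ≤ 1 := by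
  by_cases hx : ∃ x ∈ E, 0 < c.prob i x
  · obtain ⟨x, hxE, hx⟩ := hx
    rw [Finset.sum_eq_single_of_mem x hxE fun y hyE hyx => ?_]
    · exact c.prob_le_one i x
    · by_contra hy
      obtain ⟨k, hk, hlt⟩ := hE x hxE y hyE hyx.symm
      exact hlt.not_ge <|
        c.isTile i x hx y ((c.prob_nonneg i y).lt_of_ne' hy) k (hk.trans_le (hlen i))
  · push Not at hx
    exact (Finset.sum_nonpos hx).trans zero_le_one

theorem card_mul_log_card_le (hlen : ∀ i, n ≤ c.len i)
    (hE : ∀ x ∈ E, ∀ y ∈ E, x ≠ y → ∃ k < n, ε < dist (T^[k] x) (T^[k] y)) :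
    E.card * Real.log E.card ≤ ∑ x ∈ E, c.cost x := by
  rcases E.eq_empty_or_nonempty with rfl | hne
  · simp
  have hpos : (0 : ℝ) < E.card := by exact_mod_cast hne.card_pos
  have gibbs : ∀ i, Real.log E.card + 1 - E.card * c.weight i ≤ -Real.log (c.weight i) := by
    intro i
    have := Real.log_le_sub_one_of_pos (mul_pos hpos (c.weight_pos i))
    rw [Real.log_mul hpos.ne' (c.weight_pos i).ne'] at this
    linarith
  have cost_ge : ∀ x, Real.log E.card + 1 - ∑ i, c.prob i x * (E.card * c.weight i) ≤ c.cost x := by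
    intro x
    refine le_of_eq_of_le ?_ (c.average_mono gibbs x)
    simp only [average, mul_sub, Finset.sum_sub_distrib]
    rw [← Finset.sum_mul, c.sum_prob, one_mul]
  have mass_le : ∑ x ∈ E, ∑ i, c.prob i x * (E.card * c.weight i) ≤ E.card := by
    rw [Finset.sum_comm]
    calc ∑ i, ∑ x ∈ E, c.prob i x * (E.card * c.weight i)
        = ∑ i, (∑ x ∈ E, c.prob i x) * (E.card * c.weight i) := by simp only [Finset.sum_mul]
      _ ≤ ∑ i, 1 * (E.card * c.weight i) := Finset.sum_le_sum fun i _ =>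
          mul_le_mul_of_nonneg_right (c.sum_prob_le_one_of_separated hlen hE i)
            (mul_pos hpos (c.weight_pos i)).le
      _ = E.card * ∑ i, c.weight i := by simp only [one_mul, Finset.mul_sum]
      _ ≤ E.card := mul_le_of_le_one_right hpos.le c.sum_weight_le_one
  have total := Finset.sum_le_sum (s := E) fun x _ => cost_ge x
  rw [Finset.sum_sub_distrib, Finset.sum_const, nsmul_eq_mul] at total
  linarith

end Separated

section Operations

/-- The code with a single word, which describes nothing and costs nothing. -/
noncomputable def unit : OrbitCode T ε where
  Word := Unit
  prob _ _ := 1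
  weight _ := 1
  len _ := 0
  continuous_prob _ := continuous_const
  prob_nonneg _ _ := zero_le_one
  sum_prob _ := by simp
  weight_pos _ := zero_lt_one
  sum_weight_le_one := by simp
  isTile _ _ _ _ _ _ hk := absurd hk (Nat.not_lt_zero _)

@[simp]
lemma cost_unit (x : X) : (unit : OrbitCode T ε).cost x = 0 := by
  simp [cost, average, unit]

/-- The code whose words are those of `c`, regarded as descriptions of at most `n` points. -/
noncomputable def truncate (c : OrbitCode T ε) (n : ℕ) : OrbitCode T ε where
  __ := c
  len i := min (c.len i) n
  isTile i := (c.isTile i).mono_length (min_le_left _ _)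

/-- The code that first uses `c` and, when `c` has produced a word `i`, encodes the point reached
after `c.len i` steps with `d i`. -/
noncomputable def extend (hT : Continuous T) (c : OrbitCode T ε) (d : c.Word → OrbitCode T ε) :
    OrbitCode T ε where
  Word := Σ i, (d i).Word
  prob p x := c.prob p.1 x * (d p.1).prob p.2 (T^[c.len p.1] x)
  weight p := c.weight p.1 * (d p.1).weight p.2
  len p := c.len p.1 + (d p.1).len p.2
  continuous_prob p :=
    (c.continuous_prob p.1).mul (((d p.1).continuous_prob p.2).comp (hT.iterate _))
  prob_nonneg p x := mul_nonneg (c.prob_nonneg _ _) ((d p.1).prob_nonneg _ _)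
  sum_prob x := by
    simp only [Fintype.sum_sigma, ← Finset.mul_sum, sum_prob, mul_one]
  weight_pos p := mul_pos (c.weight_pos _) ((d p.1).weight_pos _)
  sum_weight_le_one := by
    simp only [Fintype.sum_sigma, ← Finset.mul_sum]
    exact (Finset.sum_le_sum fun i _ => mul_le_of_le_one_right (c.weight_pos i).le
      (d i).sum_weight_le_one).trans c.sum_weight_le_one
  isTile p := ((c.isTile p.1).inter_preimage ((d p.1).isTile p.2)).subset fun _ hx =>
    ⟨pos_of_mul_pos_left hx ((d p.1).prob_nonneg _ _),
      pos_of_mul_pos_right hx (c.prob_nonneg _ _)⟩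

variable {hT : Continuous T}

lemma average_extend (c : OrbitCode T ε) (d : c.Word → OrbitCode T ε) (v : c.Word → ℝ)
    (u : ∀ i, (d i).Word → ℝ) (x : X) :
    (c.extend hT d).average (fun p => v p.1 + u p.1 p.2) x =
      c.average (fun i => v i + (d i).average (u i) (T^[c.len i] x)) x := by
  calc (c.extend hT d).average (fun p => v p.1 + u p.1 p.2) x
      = ∑ i, ∑ j, c.prob i x * (d i).prob j (T^[c.len i] x) * (v i + u i j) :=
        Fintype.sum_sigma _
    _ = c.average (fun i => (d i).average (fun j => v i + u i j) (T^[c.len i] x)) x := by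
        simp only [average, mul_assoc, Finset.mul_sum]
    _ = c.average (fun i => v i + (d i).average (u i) (T^[c.len i] x)) x := by
        simp only [average_add, average_const]

lemma cost_extend (c : OrbitCode T ε) (d : c.Word → OrbitCode T ε) (x : X) :
    (c.extend hT d).cost x =
      c.average (fun i => -Real.log (c.weight i) + (d i).cost (T^[c.len i] x)) x := by
  refine Eq.trans ?_ (c.average_extend (hT := hT) d _ _ x)
  refine congrArg (OrbitCode.average _ · x) (funext fun p => ?_)
  rw [← neg_add, ← Real.log_mul (c.weight_pos _).ne' ((d p.1).weight_pos _).ne']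
  rfl

lemma meanLen_extend (c : OrbitCode T ε) (d : c.Word → OrbitCode T ε) (x : X) :
    (c.extend hT d).meanLen x =
      c.average (fun i => c.len i + (d i).meanLen (T^[c.len i] x)) x := by
  refine Eq.trans ?_ (c.average_extend (hT := hT) d _ _ x)
  exact congrArg (OrbitCode.average _ · x) (funext fun p => Nat.cast_add _ _)

/-- The code that first uses `c` and then `d`. -/
noncomputable def append (hT : Continuous T) (c d : OrbitCode T ε) : OrbitCode T ε :=
  c.extend hT fun _ => d

lemma len_append {c d : OrbitCode T ε} {m n : ℕ} (hc : ∀ i, c.len i = m) (hd : ∀ i, d.len i = n) :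
    ∀ p, (c.append hT d).len p = m + n :=
  fun p => congrArg₂ (· + ·) (hc p.1) (hd p.2)

lemma cost_append {c d : OrbitCode T ε} {n : ℕ} (hc : ∀ i, c.len i = n) (x : X) :
    (c.append hT d).cost x = c.cost x + d.cost (T^[n] x) := by
  rw [append, cost_extend]
  simp only [hc, average_add, average_const]
  rfl

/-- The code that uses `c` repeatedly, `r` times. -/
noncomputable def power (hT : Continuous T) (c : OrbitCode T ε) : ℕ → OrbitCode T ε
  | 0 => unit
  | r + 1 => c.append hT (power hT c r)

lemma len_power {c : OrbitCode T ε} {n : ℕ} (hc : ∀ i, c.len i = n) (r : ℕ) :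
    ∀ i, (c.power hT r).len i = r * n := by
  induction r with
  | zero => exact fun _ => (zero_mul n).symm
  | succ r ih =>
    exact fun p => (len_append hc ih p).trans (by ring)

lemma cost_power {c : OrbitCode T ε} {n : ℕ} (hc : ∀ i, c.len i = n) (r : ℕ) (x : X) :
    (c.power hT r).cost x = ∑ a ∈ Finset.range r, c.cost (T^[a * n] x) := by
  induction r generalizing x with
  | zero => exact cost_unit x
  | succ r ih =>
    rw [Finset.sum_range_succ', power, cost_append hc, ih, add_comm]
    simp only [add_one_mul, Function.iterate_add_apply, zero_mul, Function.iterate_zero_apply]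

end Operations

end OrbitCode

lemma isTile_dynBall [MetricSpace X] (T : X → X) (ε : ℝ) (n : ℕ) (x : X) :
    IsTile T ε n (dynBall T n x (ε / 2)) := by
  intro y hy z hz k hk
  have hxy : dist (T^[k] x) (T^[k] y) < ε / 2 := (dist_le_dynDist hk).trans_lt hy
  have hxz : dist (T^[k] x) (T^[k] z) < ε / 2 := (dist_le_dynDist hk).trans_lt hz
  linarith [dist_triangle_left (T^[k] y) (T^[k] z) (T^[k] x)]

lemma card_le_card_of_isTile_cover [MetricSpace X] {T : X → X} {ε : ℝ} {n : ℕ} {E : Finset X}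
    (hε : 0 ≤ ε) (hE : ∀ x ∈ E, ∀ y ∈ E, x ≠ y → ε < dynDist T n x y) {t : Finset (Set X)}
    (ht : ∀ O ∈ t, IsTile T ε n O) (hcover : ⋃₀ (t : Set (Set X)) = univ) :
    E.card ≤ t.card := by
  have hmem : ∀ x, ∃ O ∈ t, x ∈ O := fun x => by simpa using hcover.ge (mem_univ x)
  choose O hO hxO using hmem
  refine Finset.card_le_card_of_injOn O (fun x _ => hO x) fun x hx y hy hxy => ?_
  by_contra hne
  exact (hE x hx y hy hne).not_ge <|
    dynDist_le hε (ht _ (hO x) x (hxO x) y (hxy ▸ hxO y))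

section Separated

variable [MetricSpace X] [CompactSpace X] {T : X → X} {ε δ : ℝ}

lemma exists_finset_isTile_cover (hT : Continuous T) (hε : 0 < ε) (n : ℕ) :
    ∃ t : Finset (Set X), (∀ O ∈ t, IsOpen O ∧ IsTile T ε n O) ∧ ⋃₀ (t : Set (Set X)) = univ := by
  classical
  obtain ⟨s, hs⟩ := isCompact_univ.elim_finite_subcover
    (fun x => dynBall T n x (ε / 2)) (fun x => isOpen_dynBall hT n x (half_pos hε))
    fun x _ => mem_iUnion.2 ⟨x, mem_dynBall_self (half_pos hε)⟩
  refine ⟨s.image fun x => dynBall T n x (ε / 2), Finset.forall_mem_image.2 fun x _ =>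
    ⟨isOpen_dynBall hT n x (half_pos hε), isTile_dynBall T ε n x⟩, ?_⟩
  simpa using univ_subset_iff.1 hs

lemma bddAbove_card_separated (hT : Continuous T) (hε : 0 < ε) (n : ℕ) (K : Set X) :
    BddAbove {m | ∃ E : Finset X, ↑E ⊆ K ∧
      (∀ x ∈ E, ∀ y ∈ E, x ≠ y → ε < dynDist T n x y) ∧ E.card = m} := by
  obtain ⟨t, ht, hcover⟩ := exists_finset_isTile_cover hT hε n
  refine ⟨t.card, ?_⟩
  rintro _ ⟨E, -, hE, rfl⟩
  exact card_le_card_of_isTile_cover hε.le hE (fun O hO => (ht O hO).2) hcover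

lemma exists_separated_card_eq_sepNum (hT : Continuous T) (hε : 0 < ε) (n : ℕ) (K : Set X) :
    ∃ E : Finset X, ↑E ⊆ K ∧ (∀ x ∈ E, ∀ y ∈ E, x ≠ y → ε < dynDist T n x y) ∧
      E.card = sepNum T n K ε :=
  Nat.sSup_mem (s := {m | ∃ E : Finset X, (E : Set X) ⊆ K ∧
    (∀ x ∈ E, ∀ y ∈ E, x ≠ y → ε < dynDist T n x y) ∧ E.card = m})
    ⟨0, ∅, by simp⟩ (bddAbove_card_separated hT hε n K)

lemma card_le_sepNum (hT : Continuous T) (hε : 0 < ε) {n : ℕ} {K : Set X} {E : Finset X}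
    (hEK : ↑E ⊆ K) (hE : ∀ x ∈ E, ∀ y ∈ E, x ≠ y → ε < dynDist T n x y) :
    E.card ≤ sepNum T n K ε :=
  le_csSup (bddAbove_card_separated hT hε n K) ⟨E, hEK, hE, rfl⟩

lemma sepNum_univ_pos [Nonempty X] (hT : Continuous T) (hε : 0 < ε) (n : ℕ) :
    0 < sepNum T n univ ε := by
  inhabit X
  simpa [Nat.one_le_iff_ne_zero, Nat.pos_iff_ne_zero] using
    card_le_sepNum hT hε (n := n) (E := {default}) (subset_univ _) (by simp)

lemma exists_dynBall_cover_card_eq_sepNum (hT : Continuous T) (hε : 0 < ε) (n : ℕ) :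
    ∃ E : Finset X, E.card = sepNum T n univ (ε / 2) ∧ ⋃ x ∈ E, dynBall T n x ε = univ := by
  classical
  obtain ⟨E, -, hE, hcard⟩ := exists_separated_card_eq_sepNum hT (half_pos hε) n univ
  refine ⟨E, hcard, eq_univ_of_forall fun y => ?_⟩
  by_contra hy
  have hfar : ∀ x ∈ E, ε / 2 < dynDist T n x y := fun x hx => by
    have : ¬dynDist T n x y < ε := fun h => hy (mem_iUnion₂.2 ⟨x, hx, h⟩)
    linarith
  have hyE : y ∉ E := fun h => hy (mem_iUnion₂.2 ⟨y, h, mem_dynBall_self hε⟩)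
  have hsep : ∀ a ∈ insert y E, ∀ b ∈ insert y E, a ≠ b → ε / 2 < dynDist T n a b := by
    simp only [Finset.forall_mem_insert]
    exact ⟨⟨fun h => absurd rfl h, fun b hb _ => dynDist_comm T n y b ▸ hfar b hb⟩,
      fun a ha => ⟨fun _ => hfar a ha, hE a ha⟩⟩
  have := card_le_sepNum hT (half_pos hε) (subset_univ _) hsep
  rw [Finset.card_insert_of_notMem hyE] at this
  omega

variable [MeasurableSpace X] (μ : Measure X) [IsProbabilityMeasure μ]

lemma katokNum_le_sepNum (hT : Continuous T) (hε : 0 < ε) (hδ : δ < 1) (n : ℕ) :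
    katokNum T μ n ε δ ≤ sepNum T n univ (ε / 2) := by
  obtain ⟨E, hcard, hE⟩ := exists_dynBall_cover_card_eq_sepNum hT hε n
  exact Nat.sInf_le ⟨E, by simpa [hE] using hδ, hcard⟩

lemma exists_card_eq_katokNum (hT : Continuous T) (hε : 0 < ε) (hδ : δ < 1) (n : ℕ) :
    ∃ F : Finset X, ENNReal.ofReal δ < μ (⋃ x ∈ F, dynBall T n x ε) ∧
      F.card = katokNum T μ n ε δ := by
  obtain ⟨E, -, hE⟩ := exists_dynBall_cover_card_eq_sepNum hT hε n
  exact Nat.sInf_mem (s := {m | ∃ F : Finset X,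
    ENNReal.ofReal δ < μ (⋃ x ∈ F, dynBall T n x ε) ∧ F.card = m})
    ⟨_, E, by simpa [hE] using hδ, rfl⟩

lemma katokNum_pos (hT : Continuous T) (hε : 0 < ε) (hδ : δ < 1) (n : ℕ) :
    0 < katokNum T μ n ε δ := by
  obtain ⟨F, hF, hcard⟩ := exists_card_eq_katokNum μ hT hε hδ n
  rw [← hcard, Finset.card_pos, Finset.nonempty_iff_ne_empty]
  rintro rfl
  simp at hF

theorem katokEntLower_le_sepEnt (hT : Continuous T) (hε : 0 < ε) (hδ : δ < 1) :
    katokEntLower T μ ε δ ≤ sepEnt T univ (ε / 2) := by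
  refine (liminf_le_limsup).trans (limsup_le_limsup (Eventually.of_forall fun n => ?_))
  have := katokNum_pos μ hT hε hδ n
  have := katokNum_le_sepNum μ hT hε hδ n
  rw [EReal.coe_le_coe_iff]
  gcongr

end Separated

namespace OrbitCode

section Constructions

variable [PseudoMetricSpace X] {T : X → X} {ε : ℝ}

/-- The code whose word probabilities are a given partition of unity. -/
noncomputable def ofPartition {ι : Type} [Fintype ι] (f : PartitionOfUnity ι X)
    (weight : ι → ℝ) (len : ι → ℕ) (weight_pos : ∀ i, 0 < weight i)
    (sum_weight_le_one : ∑ i, weight i ≤ 1)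
    (isTile : ∀ i, IsTile T ε (len i) (Function.support (f i))) : OrbitCode T ε where
  Word := ι
  prob i := f i
  weight := weight
  len := len
  continuous_prob i := (f i).continuous
  prob_nonneg := f.nonneg
  sum_prob x := by rw [← finsum_eq_sum_of_fintype, f.sum_eq_one (mem_univ x)]
  weight_pos := weight_pos
  sum_weight_le_one := sum_weight_le_one
  isTile i := (isTile i).subset fun _ hx => ne_of_gt hx

/-- The code with two words of length `0`, the first of which has probability `χ`. -/
noncomputable def coin (T : X → X) (ε : ℝ) (χ : C(X, unitInterval)) : OrbitCode T ε where
  Word := Bool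
  prob b x := if b then (χ x : ℝ) else unitInterval.symm (χ x)
  weight _ := 1 / 2
  len _ := 0
  continuous_prob b := by
    cases b
    · exact continuous_subtype_val.comp (unitInterval.continuous_symm.comp χ.continuous)
    · exact continuous_subtype_val.comp χ.continuous
  prob_nonneg b x := by
    cases b
    · exact (unitInterval.symm (χ x)).2.1
    · exact (χ x).2.1
  sum_prob x := by simp
  weight_pos _ := by norm_num
  sum_weight_le_one := by simp
  isTile _ _ _ _ _ _ hk := absurd hk (Nat.not_lt_zero _)

/-- The code that uses `c` with probability `χ` and `d` with probability `1 - χ`, and announces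
which of the two it uses. -/
noncomputable def mix (hT : Continuous T) (χ : C(X, unitInterval)) (c d : OrbitCode T ε) :
    OrbitCode T ε :=
  (coin T ε χ).extend hT fun b : Bool => if b then c else d

lemma len_mix {hT : Continuous T} (χ : C(X, unitInterval)) {c d : OrbitCode T ε} {n : ℕ}
    (hc : ∀ i, c.len i = n) (hd : ∀ i, d.len i = n) : ∀ p, (mix hT χ c d).len p = n
  | ⟨true, i⟩ => (zero_add _).trans (hc i)
  | ⟨false, i⟩ => (zero_add _).trans (hd i)

lemma cost_mix {hT : Continuous T} (χ : C(X, unitInterval)) (c d : OrbitCode T ε) (x : X) :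
    (mix hT χ c d).cost x = Real.log 2 + (χ x * c.cost x + (1 - χ x) * d.cost x) := by
  have average_coin (u : Bool → ℝ) :
      (coin T ε χ).average u x = χ x * u true + (1 - χ x) * u false := Fintype.sum_bool _
  have log_half : Real.log (1 / 2) = -Real.log 2 := by rw [one_div, Real.log_inv]
  refine (cost_extend _ _ _).trans ((average_coin _).trans ?_)
  simp only [coin, log_half, Function.iterate_zero_apply, if_true, Bool.false_eq_true, if_false]
  ring

end Constructions

theorem exists_len_eq_cost_eq [MetricSpace X] [CompactSpace X] {T : X → X} {ε : ℝ}
    (hT : Continuous T) (hε : 0 < ε) (n : ℕ) :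
    ∃ (c : OrbitCode T ε) (L : ℝ), (∀ i, c.len i = n) ∧ ∀ x, c.cost x = L := by
  obtain ⟨t, ht, hcover⟩ := exists_finset_isTile_cover hT hε n
  let O : Fin t.card → Set X := fun i => t.equivFin.symm i
  have hO : ∀ i, IsOpen (O i) ∧ IsTile T ε n (O i) := fun i => ht _ (t.equivFin.symm i).2
  have hUnion : univ ⊆ ⋃ i, O i := by
    rw [t.equivFin.symm.surjective.iUnion_comp fun O : t => (O : Set X)]
    exact (sUnion_eq_iUnion ▸ hcover).ge
  obtain ⟨f, hf⟩ := PartitionOfUnity.exists_isSubordinate isClosed_univ O (fun i => (hO i).1) hUnion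
  have weight_pos : (0 : ℝ) < ((t.card : ℝ) + 1)⁻¹ := by positivity
  have sum_weight : ∑ _i : Fin t.card, ((t.card : ℝ) + 1)⁻¹ ≤ 1 := by
    rw [Finset.sum_const, Finset.card_univ, Fintype.card_fin, nsmul_eq_mul, ← div_eq_mul_inv,
      div_le_one (by positivity)]
    linarith
  have isTile (i : Fin t.card) : IsTile T ε n (Function.support (f i)) :=
    (hO i).2.subset ((subset_tsupport _).trans (hf i))
  let c := ofPartition f (fun _ => ((t.card : ℝ) + 1)⁻¹) (fun _ => n) (fun _ => weight_pos)
    sum_weight isTile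
  exact ⟨c, _, fun _ => rfl, c.average_const (-Real.log ((t.card : ℝ) + 1)⁻¹)⟩

end OrbitCode

lemma OrbitCode.integrable_cost [PseudoMetricSpace X] [CompactSpace X] [MeasurableSpace X]
    [OpensMeasurableSpace X] {T : X → X} {ε : ℝ} (c : OrbitCode T ε) (μ : Measure X)
    [IsFiniteMeasure μ] : Integrable c.cost μ :=
  c.continuous_cost.integrable_of_hasCompactSupport (.of_compactSpace _)

section CodeEntropy

variable [PseudoMetricSpace X] [MeasurableSpace X] {T : X → X} {ε : ℝ}

/-- The least mean cost per step, with respect to `μ`, of an orbit code of constant length. It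
plays the role of the entropy of `T` with respect to `μ` at scale `ε`. -/
noncomputable def codeEntropy (T : X → X) (ε : ℝ) (μ : Measure X) : ℝ :=
  ⨅ c : {c : OrbitCode T ε × ℕ // 0 < c.2 ∧ ∀ i, c.1.len i = c.2},
    (∫ x, c.1.1.cost x ∂μ) / c.1.2

lemma bddBelow_codeEntropy (T : X → X) (ε : ℝ) (μ : Measure X) :
    BddBelow (range fun c : {c : OrbitCode T ε × ℕ // 0 < c.2 ∧ ∀ i, c.1.len i = c.2} =>
      (∫ x, c.1.1.cost x ∂μ) / c.1.2) :=
  ⟨0, forall_mem_range.2 fun c =>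
    div_nonneg (integral_nonneg c.1.1.cost_nonneg) (Nat.cast_nonneg _)⟩

lemma mul_codeEntropy_le (μ : Measure X) (c : OrbitCode T ε) {n : ℕ}
    (hlen : ∀ i, n ≤ c.len i) : n * codeEntropy T ε μ ≤ ∫ x, c.cost x ∂μ := by
  rcases n.eq_zero_or_pos with rfl | hn
  · simpa using integral_nonneg c.cost_nonneg
  · rw [mul_comm, ← le_div_iff₀ (by exact_mod_cast hn)]
    exact ciInf_le (bddBelow_codeEntropy T ε μ)
      ⟨(c.truncate n, n), hn, fun i => min_eq_right (hlen i)⟩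

lemma codeEntropy_smul (a : ENNReal) (μ : Measure X) :
    codeEntropy T ε (a • μ) = a.toReal * codeEntropy T ε μ := by
  simp only [codeEntropy, integral_smul_measure, smul_eq_mul, mul_div_assoc]
  exact (Real.mul_iInf_of_nonneg ENNReal.toReal_nonneg _).symm

lemma upperSemicontinuous_codeEntropy [CompactSpace X] [OpensMeasurableSpace X] :
    UpperSemicontinuous fun μ : ProbabilityMeasure X => codeEntropy T ε μ :=
  upperSemicontinuous_ciInf (fun μ => bddBelow_codeEntropy T ε μ) fun c =>
    ((ProbabilityMeasure.continuous_integral_continuousMap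
      (⟨c.1.1.cost, c.1.1.continuous_cost⟩ : C(X, ℝ))).div_const _).upperSemicontinuous

end CodeEntropy

lemma nonempty_codeEntropy [MetricSpace X] [CompactSpace X] {T : X → X} {ε : ℝ}
    (hT : Continuous T) (hε : 0 < ε) :
    Nonempty {c : OrbitCode T ε × ℕ // 0 < c.2 ∧ ∀ i, c.1.len i = c.2} := by
  obtain ⟨c, -, hlen, -⟩ := OrbitCode.exists_len_eq_cost_eq hT hε 1
  exact ⟨(c, 1), one_pos, hlen⟩

section CodeEntropyCompact

variable [MetricSpace X] [CompactSpace X] [MeasurableSpace X] {T : X → X} {ε : ℝ}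

lemma le_codeEntropy (hT : Continuous T) (hε : 0 < ε) {μ : Measure X} {s : ℝ}
    (h : ∀ (n : ℕ) (c : OrbitCode T ε), 0 < n → (∀ i, c.len i = n) →
      n * s ≤ ∫ x, c.cost x ∂μ) : s ≤ codeEntropy T ε μ := by
  have := nonempty_codeEntropy hT hε
  refine le_ciInf fun c => ?_
  rw [le_div_iff₀ (by exact_mod_cast c.2.1), mul_comm]
  exact h c.1.2 c.1.1 c.2.1 c.2.2

lemma exists_integral_cost_lt (hT : Continuous T) (hε : 0 < ε) {μ : Measure X} {s : ℝ}
    (h : codeEntropy T ε μ < s) :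
    ∃ (n : ℕ) (c : OrbitCode T ε), 0 < n ∧ (∀ i, c.len i = n) ∧ ∫ x, c.cost x ∂μ < n * s := by
  contrapose! h
  exact le_codeEntropy hT hε fun n c hn hc => h n c hn hc

end CodeEntropyCompact

section Misiurewicz

/-- The average of the Dirac masses along the first `n` points of the orbits of the points of
`E`. -/
noncomputable def empiricalMeasure [MeasurableSpace X] (T : X → X) (E : Finset X) (n : ℕ) :
    Measure X :=
  ((n * E.card : ℕ) : ENNReal)⁻¹ • ∑ p ∈ Finset.range n ×ˢ E, Measure.dirac (T^[p.1] p.2)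

lemma isProbabilityMeasure_empiricalMeasure [MeasurableSpace X] (T : X → X) {E : Finset X}
    (hE : E.Nonempty) {n : ℕ} (hn : 0 < n) : IsProbabilityMeasure (empiricalMeasure T E n) := by
  constructor
  simp only [empiricalMeasure, Measure.smul_apply, Measure.finsetSum_apply, measure_univ,
    Finset.sum_const, Finset.card_product, Finset.card_range, nsmul_eq_mul, mul_one, smul_eq_mul]
  exact ENNReal.inv_mul_cancel (by exact_mod_cast (Nat.mul_pos hn hE.card_pos).ne')
    (ENNReal.natCast_ne_top _)

lemma integral_empiricalMeasure [MeasurableSpace X] [MeasurableSingletonClass X] (T : X → X)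
    (E : Finset X) (n : ℕ) (g : X → ℝ) :
    ∫ x, g x ∂empiricalMeasure T E n =
      (∑ x ∈ E, ∑ k ∈ Finset.range n, g (T^[k] x)) / (n * E.card) := by
  rw [empiricalMeasure, integral_smul_measure,
    integral_finsetSum_measure fun _ _ => integrable_dirac enorm_lt_top]
  simp only [integral_dirac]
  rw [Finset.sum_product_right, ENNReal.toReal_inv, ENNReal.toReal_natCast, smul_eq_mul,
    Nat.cast_mul, div_eq_inv_mul]

lemma abs_integral_comp_sub_integral_empiricalMeasure_le [MeasurableSpace X]
    [MeasurableSingletonClass X] (T : X → X) {E : Finset X} (hE : E.Nonempty) (n : ℕ) {g : X → ℝ}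
    {C : ℝ} (hg : ∀ x, |g x| ≤ C) :
    |∫ x, g (T x) ∂empiricalMeasure T E n - ∫ x, g x ∂empiricalMeasure T E n| ≤ 2 * C / n := by
  have telescope (x : X) : ∑ k ∈ Finset.range n, g (T (T^[k] x)) -
      ∑ k ∈ Finset.range n, g (T^[k] x) = g (T^[n] x) - g x := by
    simp only [← Function.iterate_succ_apply', ← Finset.sum_sub_distrib]
    exact Finset.sum_range_sub (fun k => g (T^[k] x)) n
  have abs_le : |∑ x ∈ E, (g (T^[n] x) - g x)| ≤ E.card * (2 * C) := by
    rw [← nsmul_eq_mul]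
    refine (Finset.abs_sum_le_sum_abs _ _).trans (Finset.sum_le_card_nsmul _ _ _ fun x _ => ?_)
    exact (abs_sub _ _).trans (by linarith [hg (T^[n] x), hg x])
  have := hE.card_pos
  rw [integral_empiricalMeasure, integral_empiricalMeasure, ← sub_div, ← Finset.sum_sub_distrib,
    Finset.sum_congr rfl fun x _ => telescope x, abs_div,
    abs_of_nonneg (show (0 : ℝ) ≤ n * E.card by positivity)]
  calc |∑ x ∈ E, (g (T^[n] x) - g x)| / (n * E.card)
      ≤ E.card * (2 * C) / (n * E.card) := by gcongr
    _ = 2 * C / n := by field_simp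

lemma measurePreserving_of_tendsto [TopologicalSpace X] [HasOuterApproxClosed X]
    [MeasurableSpace X] [BorelSpace X] {T : X → X} (hT : Continuous T) {ι : Type*} {l : Filter ι}
    [l.NeBot] {ν : ι → ProbabilityMeasure X} {μ : ProbabilityMeasure X} (hν : Tendsto ν l (𝓝 μ))
    (h : ∀ g : BoundedContinuousFunction X ℝ,
      Tendsto (fun i => ∫ x, g (T x) ∂(ν i : Measure X) - ∫ x, g x ∂(ν i : Measure X)) l (𝓝 0)) :
    MeasurePreserving T (μ : Measure X) μ := by
  refine ⟨hT.measurable, ?_⟩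
  have := Measure.isProbabilityMeasure_map (μ := (μ : Measure X)) hT.measurable.aemeasurable
  refine ext_of_forall_integral_eq_of_IsFiniteMeasure fun g => ?_
  rw [integral_map hT.measurable.aemeasurable g.continuous.aestronglyMeasurable]
  have integral_tendsto := ProbabilityMeasure.tendsto_iff_forall_integral_tendsto.1 hν
  have difference_tendsto := (integral_tendsto (g.compContinuous ⟨T, hT⟩)).sub (integral_tendsto g)
  exact sub_eq_zero.1 (tendsto_nhds_unique difference_tendsto (h g))

lemma sum_range_sum_range_mul_add {M : Type*} [AddCommMonoid M] (f : ℕ → M) (m r : ℕ) :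
    ∑ j ∈ Finset.range m, ∑ a ∈ Finset.range r, f (a * m + j) =
      ∑ k ∈ Finset.range (r * m), f k := by
  rw [Finset.sum_comm]
  induction r with
  | zero => simp
  | succ r ih => rw [Finset.sum_range_succ, ih, Nat.succ_mul, Finset.sum_range_add]

namespace OrbitCode

variable [PseudoMetricSpace X]

lemma card_mul_log_card_le_of_shift {T : X → X} {ε L : ℝ} {m n j : ℕ}
    (hT : Continuous T) {b c : OrbitCode T ε} (hb : ∀ i, b.len i = m) (hbL : ∀ x, b.cost x = L)
    (hc : ∀ i, c.len i = m) {E : Finset X}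
    (hE : ∀ x ∈ E, ∀ y ∈ E, x ≠ y → ∃ k < n, ε < dist (T^[k] x) (T^[k] y)) (hj : j < m) :
    E.card * Real.log E.card ≤
      ∑ x ∈ E, (2 * L + ∑ a ∈ Finset.range (n / m), c.cost (T^[a * m + j] x)) := by
  let d := ((b.truncate j).append hT (c.power hT (n / m))).append hT b
  have len_truncate : ∀ i, (b.truncate j).len i = j := fun i =>
    min_eq_right ((hb i).symm ▸ hj.le)
  have len_append_power := len_append len_truncate (len_power hc (n / m) (hT := hT)) (hT := hT)
  have len_d : ∀ i, d.len i = j + n / m * m + m := len_append len_append_power hb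
  refine (d.card_mul_log_card_le (fun i => ?_) hE).trans_eq (Finset.sum_congr rfl fun x _ => ?_)
  · have := Nat.lt_div_mul_add (a := n) hj.pos
    rw [len_d]
    omega
  · have cost_truncate : (b.truncate j).cost x = L := hbL x
    rw [cost_append len_append_power, cost_append len_truncate, cost_power hc, cost_truncate, hbL]
    simp only [← Function.iterate_add_apply]
    ring

/-- Averaging over the `m` ways to cut an orbit segment into blocks of length `m`. -/
lemma mul_card_mul_log_card_le {T : X → X} {ε L : ℝ} {m n : ℕ}
    (hT : Continuous T) {b c : OrbitCode T ε} (hb : ∀ i, b.len i = m) (hbL : ∀ x, b.cost x = L)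
    (hc : ∀ i, c.len i = m) {E : Finset X}
    (hE : ∀ x ∈ E, ∀ y ∈ E, x ≠ y → ∃ k < n, ε < dist (T^[k] x) (T^[k] y)) :
    m * (E.card * Real.log E.card) ≤
      m * (E.card * (2 * L)) + ∑ x ∈ E, ∑ k ∈ Finset.range n, c.cost (T^[k] x) := by
  have sum_shifts := Finset.sum_le_sum fun j hj =>
    card_mul_log_card_le_of_shift hT hb hbL hc hE (Finset.mem_range.1 hj)
  simp only [Finset.sum_const, Finset.card_range, nsmul_eq_mul, Finset.sum_add_distrib]
    at sum_shifts
  refine sum_shifts.trans (add_le_add_right ?_ _)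
  rw [Finset.sum_comm]
  refine Finset.sum_le_sum fun x _ => ?_
  rw [sum_range_sum_range_mul_add fun k => c.cost (T^[k] x)]
  exact Finset.sum_le_sum_of_subset_of_nonneg
    (Finset.range_subset_range.2 (Nat.div_mul_le_self n m)) fun _ _ _ => c.cost_nonneg _

lemma mul_sub_le_integral_empiricalMeasure [MeasurableSpace X] [MeasurableSingletonClass X]
    {T : X → X} {ε L s : ℝ} {m n : ℕ} (hT : Continuous T) {b c : OrbitCode T ε}
    (hb : ∀ i, b.len i = m) (hbL : ∀ x, b.cost x = L) (hc : ∀ i, c.len i = m) {E : Finset X}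
    (hE : ∀ x ∈ E, ∀ y ∈ E, x ≠ y → ∃ k < n, ε < dist (T^[k] x) (T^[k] y))
    (hne : E.Nonempty) (hn : 0 < n) (hs : s ≤ Real.log E.card / n) :
    m * s - m * (2 * L) / n ≤ ∫ x, c.cost x ∂empiricalMeasure T E n := by
  have := hne.card_pos
  have n_pos : (0 : ℝ) < n := by exact_mod_cast hn
  rw [integral_empiricalMeasure, le_div_iff₀ (by positivity)]
  calc (m * s - m * (2 * L) / n) * (n * E.card)
      = m * (E.card * (s * n)) - m * (E.card * (2 * L)) := by field_simp
    _ ≤ m * (E.card * Real.log E.card) - m * (E.card * (2 * L)) := by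
        gcongr
        exact (le_div_iff₀ n_pos).1 hs
    _ ≤ ∑ x ∈ E, ∑ k ∈ Finset.range n, c.cost (T^[k] x) :=
        sub_le_iff_le_add'.2 (mul_card_mul_log_card_le hT hb hbL hc hE)

end OrbitCode

theorem exists_measurePreserving_le_codeEntropy [MetricSpace X] [CompactSpace X]
    [Nonempty X] [MeasurableSpace X] [BorelSpace X] {T : X → X} {ε s : ℝ} (hT : Continuous T)
    (hε : 0 < ε) (hs : (s : EReal) < sepEnt T univ ε) :
    ∃ μ : ProbabilityMeasure X, MeasurePreserving T (μ : Measure X) μ ∧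
      s ≤ codeEntropy T ε (μ : Measure X) := by
  choose E _ separated card_E using fun n => exists_separated_card_eq_sepNum hT hε n univ
  obtain ⟨φ, φ_mono, hφ⟩ := extraction_of_frequently_atTop <|
    ((frequently_lt_of_lt_limsup (by isBoundedDefault) hs).and_eventually
      (eventually_gt_atTop 0))
  have pos (k : ℕ) : 0 < φ k := (hφ k).2
  have lt_log (k : ℕ) : s < Real.log (E (φ k)).card / φ k := by
    rw [card_E]
    exact EReal.coe_lt_coe_iff.1 (hφ k).1
  have nonempty (k : ℕ) : (E (φ k)).Nonempty := by
    rw [← Finset.card_pos, card_E]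
    exact sepNum_univ_pos hT hε _
  let ν (k : ℕ) : ProbabilityMeasure X := ⟨empiricalMeasure T (E (φ k)) (φ k),
    isProbabilityMeasure_empiricalMeasure T (nonempty k) (pos k)⟩
  obtain ⟨μ, ψ, ψ_mono, hμ⟩ := CompactSpace.tendsto_subseq ν
  have tendsto_inv (a : ℝ) : Tendsto (fun k => a / (φ (ψ k) : ℝ)) atTop (𝓝 0) :=
    (tendsto_natCast_atTop_atTop.comp (φ_mono.comp ψ_mono).tendsto_atTop).const_div_atTop a
  refine ⟨μ, measurePreserving_of_tendsto hT hμ fun g => ?_, ?_⟩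
  · exact squeeze_zero_norm (fun k => abs_integral_comp_sub_integral_empiricalMeasure_le T
      (nonempty _) _ g.norm_coe_le_norm) (tendsto_inv _)
  · refine le_codeEntropy hT hε fun m c _ hc => ?_
    obtain ⟨b, L, hb, hbL⟩ := OrbitCode.exists_len_eq_cost_eq hT hε m
    have tendsto_lower := (tendsto_inv (m * (2 * L))).const_sub (m * s)
    rw [sub_zero] at tendsto_lower
    have tendsto_cost := ((ProbabilityMeasure.continuous_integral_continuousMap
      (⟨c.cost, c.continuous_cost⟩ : C(X, ℝ))).tendsto μ).comp hμ
    refine le_of_tendsto_of_tendsto' tendsto_lower tendsto_cost fun k => ?_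
    exact OrbitCode.mul_sub_le_integral_empiricalMeasure hT hb hbL hc
      (fun x hx y hy hxy => exists_lt_dist_of_lt_dynDist hε.le (separated _ x hx y hy hxy))
      (nonempty _) (pos _) (lt_log _).le

end Misiurewicz

section ErgodicMaximizer

lemma integral_comp_iterate [MeasurableSpace X] {T : X → X} {μ : Measure X}
    (hμ : MeasurePreserving T μ μ) {f : X → ℝ} (hf : AEStronglyMeasurable f μ) (k : ℕ) :
    ∫ x, f (T^[k] x) ∂μ = ∫ x, f x ∂μ := by
  have hk := hμ.iterate k
  conv_rhs => rw [← hk.map_eq]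
  exact (integral_map hk.measurable.aemeasurable (hk.map_eq.symm ▸ hf)).symm

namespace OrbitCode

/-- The code `mix` with the probability `d.cost - c.cost`, clamped to the unit interval. -/
lemma exists_cost_le_min [PseudoMetricSpace X] {T : X → X} {ε : ℝ} {n : ℕ} (hT : Continuous T)
    {c d : OrbitCode T ε} (hc : ∀ i, c.len i = n) (hd : ∀ i, d.len i = n) :
    ∃ e : OrbitCode T ε, (∀ i, e.len i = n) ∧
      ∀ x, e.cost x ≤ Real.log 2 + 1 + min (c.cost x) (d.cost x) := by
  let χ : C(X, unitInterval) := ⟨fun x => projIcc 0 1 zero_le_one (d.cost x - c.cost x),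
    continuous_projIcc.comp (d.continuous_cost.sub c.continuous_cost)⟩
  refine ⟨mix hT χ c d, len_mix χ hc hd, fun x => ?_⟩
  have χ_eq : (χ x : ℝ) = max 0 (min 1 (d.cost x - c.cost x)) :=
    coe_projIcc _ _ zero_le_one _
  rw [cost_mix, χ_eq, add_assoc (Real.log 2)]
  refine add_le_add_right ?_ _
  rcases le_total (d.cost x) (c.cost x) with h | h
  · rw [min_eq_right h, max_eq_left (min_le_of_right_le (sub_nonpos.2 h))]
    linarith
  · rw [min_eq_left h, max_eq_right (le_min zero_le_one (sub_nonneg.2 h))]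
    rcases le_total 1 (d.cost x - c.cost x) with h' | h'
    · rw [min_eq_left h']
      linarith
    · rw [min_eq_right h']
      nlinarith

lemma integral_cost_power [PseudoMetricSpace X] [CompactSpace X] [MeasurableSpace X] [BorelSpace X]
    {T : X → X} {ε : ℝ} {n : ℕ} {hT : Continuous T} {c : OrbitCode T ε} (hc : ∀ i, c.len i = n)
    {μ : Measure X} [IsFiniteMeasure μ] (hμ : MeasurePreserving T μ μ) (r : ℕ) :
    ∫ x, (c.power hT r).cost x ∂μ = r * ∫ x, c.cost x ∂μ := by
  simp only [cost_power hc]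
  have integrable (k : ℕ) : Integrable (fun x => c.cost (T^[k] x)) μ :=
    (hμ.iterate k).integrable_comp_of_integrable (c.integrable_cost μ)
  rw [integral_finsetSum _ fun a _ => integrable (a * n)]
  simp only [integral_comp_iterate hμ c.continuous_cost.aestronglyMeasurable, Finset.sum_const,
    Finset.card_range, nsmul_eq_mul]

end OrbitCode

lemma mul_codeEntropy_add_le [PseudoMetricSpace X] [CompactSpace X] [MeasurableSpace X]
    [BorelSpace X] {T : X → X} {ε : ℝ} (hT : Continuous T) {c d : OrbitCode T ε} {n : ℕ}
    (hc : ∀ i, c.len i = n) (hd : ∀ i, d.len i = n) (μ ν : Measure X) [IsFiniteMeasure μ]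
    [IsFiniteMeasure ν] :
    n * codeEntropy T ε (μ + ν) ≤
      (Real.log 2 + 1) * (μ + ν).real univ + (∫ x, c.cost x ∂μ + ∫ x, d.cost x ∂ν) := by
  obtain ⟨e, he, he_le⟩ := OrbitCode.exists_cost_le_min hT hc hd
  have integral_le {ρ : Measure X} [IsFiniteMeasure ρ] {f : OrbitCode T ε}
      (h : ∀ x, e.cost x ≤ Real.log 2 + 1 + f.cost x) :
      ∫ x, e.cost x ∂ρ ≤ (Real.log 2 + 1) * ρ.real univ + ∫ x, f.cost x ∂ρ := by
    calc ∫ x, e.cost x ∂ρ ≤ ∫ x, (Real.log 2 + 1 + f.cost x) ∂ρ :=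
          integral_mono (e.integrable_cost ρ) ((integrable_const _).add (f.integrable_cost ρ)) h
      _ = (Real.log 2 + 1) * ρ.real univ + ∫ x, f.cost x ∂ρ := by
          rw [integral_add (integrable_const _) (f.integrable_cost ρ), integral_const, smul_eq_mul,
            mul_comm]
  have hμ := integral_le (ρ := μ) fun x => (he_le x).trans (by gcongr; exact min_le_left _ _)
  have hν := integral_le (ρ := ν) fun x => (he_le x).trans (by gcongr; exact min_le_right _ _)
  refine (mul_codeEntropy_le _ e fun i => (he i).ge).trans ?_
  rw [integral_add_measure (e.integrable_cost μ) (e.integrable_cost ν), measureReal_add_apply]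
  linarith

lemma codeEntropy_add_le [MetricSpace X] [CompactSpace X] [MeasurableSpace X] [BorelSpace X]
    {T : X → X} {ε : ℝ} (hT : Continuous T) (hε : 0 < ε) {μ ν : Measure X} [IsFiniteMeasure μ]
    [IsFiniteMeasure ν] (hμ : MeasurePreserving T μ μ) (hν : MeasurePreserving T ν ν) :
    codeEntropy T ε (μ + ν) ≤ codeEntropy T ε μ + codeEntropy T ε ν := by
  refine le_of_forall_gt_imp_ge_of_dense fun s hs => ?_
  obtain ⟨a, b, ha, hb, rfl⟩ : ∃ a b, codeEntropy T ε μ < a ∧ codeEntropy T ε ν < b ∧ a + b = s :=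
    ⟨codeEntropy T ε μ + (s - (codeEntropy T ε μ + codeEntropy T ε ν)) / 2,
      codeEntropy T ε ν + (s - (codeEntropy T ε μ + codeEntropy T ε ν)) / 2,
      by linarith, by linarith, by ring⟩
  obtain ⟨m, c, hm, hc, hcμ⟩ := exists_integral_cost_lt hT hε ha
  obtain ⟨n, d, hn, hd, hdν⟩ := exists_integral_cost_lt hT hε hb
  let C := (Real.log 2 + 1) * (μ + ν).real univ
  have bound (r : ℕ) : codeEntropy T ε (μ + ν) ≤ C / (m * n) / (r + 1 : ℕ) + (a + b) := by
    have len_c := OrbitCode.len_power hc ((r + 1) * n) (hT := hT)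
    have len_d : ∀ i, (d.power hT ((r + 1) * m)).len i = (r + 1) * n * m := fun i =>
      (OrbitCode.len_power hd _ i).trans (by ring)
    have h := mul_codeEntropy_add_le hT len_c len_d μ ν
    rw [OrbitCode.integral_cost_power hc hμ, OrbitCode.integral_cost_power hd hν] at h
    push_cast at h ⊢
    refine le_of_mul_le_mul_left (h.trans ?_) (show 0 < ((r : ℝ) + 1) * n * m by positivity)
    calc C + ((r + 1) * n * ∫ x, c.cost x ∂μ + (r + 1) * m * ∫ x, d.cost x ∂ν)
        ≤ C + ((r + 1) * n * (m * a) + (r + 1) * m * (n * b)) := by gcongr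
      _ = (r + 1) * n * m * (C / (m * n) / (r + 1) + (a + b)) := by field_simp
  have lim := ((tendsto_const_div_atTop_nhds_zero_nat (C / (m * n))).comp
    (tendsto_add_atTop_nat 1)).add_const (a + b)
  rw [zero_add] at lim
  exact ge_of_tendsto' lim bound

lemma nonempty_extremePoints_coe_image [TopologicalSpace X] [HasOuterApproxClosed X]
    [MeasurableSpace X] [BorelSpace X] {K : Set (ProbabilityMeasure X)} (hK : IsCompact K)
    (hne : K.Nonempty) :
    (extremePoints ENNReal ((↑) '' K : Set (Measure X))).Nonempty := by
  let Φ (μ : ProbabilityMeasure X) (g : BoundedContinuousFunction X ℝ) : ℝ :=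
    ∫ x, g x ∂(μ : Measure X)
  have hΦ : Continuous Φ := continuous_pi fun g => continuous_iff_continuousAt.2 fun μ =>
    ProbabilityMeasure.tendsto_iff_forall_integral_tendsto.1 tendsto_id g
  obtain ⟨-, ⟨μ, hμ, rfl⟩, hext⟩ := (hK.image hΦ).extremePoints_nonempty (hne.image Φ)
  refine ⟨μ, ⟨μ, hμ, rfl⟩, ?_⟩
  rintro _ ⟨ν₁, hν₁, rfl⟩ _ ⟨ν₂, hν₂, rfl⟩ ⟨a, b, ha, hb, hab, hμ_eq⟩
  have ha_top : a ≠ ⊤ := ne_top_of_le_ne_top ENNReal.one_ne_top (hab ▸ le_self_add)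
  have hb_top : b ≠ ⊤ := ne_top_of_le_ne_top ENNReal.one_ne_top (hab ▸ le_add_self)
  refine ext_of_forall_integral_eq_of_IsFiniteMeasure fun g => congrFun (hext ⟨ν₁, hν₁, rfl⟩
    ⟨ν₂, hν₂, rfl⟩ ⟨a.toReal, b.toReal, ENNReal.toReal_pos ha.ne' ha_top,
      ENNReal.toReal_pos hb.ne' hb_top, ?_, ?_⟩) g
  · rw [← ENNReal.toReal_add ha_top hb_top, hab, ENNReal.toReal_one]
  · funext g
    simp only [Φ, Pi.add_apply, Pi.smul_apply, ← hμ_eq]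
    rw [integral_add_measure ((g.integrable _).smul_measure ha_top)
      ((g.integrable _).smul_measure hb_top), integral_smul_measure, integral_smul_measure]

lemma isClosed_setOf_measurePreserving [TopologicalSpace X] [HasOuterApproxClosed X]
    [MeasurableSpace X] [BorelSpace X] {T : X → X} (hT : Continuous T) :
    IsClosed {μ : ProbabilityMeasure X | MeasurePreserving T (μ : Measure X) μ} := by
  have invariant_iff (μ : ProbabilityMeasure X) : MeasurePreserving T (μ : Measure X) μ ↔
      μ.map hT.measurable.aemeasurable = μ :=
    ⟨fun h => Subtype.ext h.map_eq, fun h => ⟨hT.measurable, congrArg Subtype.val h⟩⟩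
  simp only [invariant_iff]
  exact isClosed_eq (ProbabilityMeasure.continuous_map hT) continuous_id

lemma sepEnt_nonneg [MetricSpace X] (T : X → X) (K : Set X) (ε : ℝ) : 0 ≤ sepEnt T K ε :=
  le_limsup_of_frequently_le (.of_forall fun _ => EReal.coe_nonneg.2
    (div_nonneg (Real.log_natCast_nonneg _) (Nat.cast_nonneg _)))

section Maximizer

variable [MetricSpace X] [CompactSpace X] [MeasurableSpace X] [BorelSpace X]
  {T : X → X} {ε : ℝ}

lemma isExtreme_codeEntropy_eq (hT : Continuous T) (hε : 0 < ε) {M : ℝ}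
    (hM : ∀ μ : ProbabilityMeasure X, MeasurePreserving T (μ : Measure X) μ →
      codeEntropy T ε (μ : Measure X) ≤ M) :
    IsExtreme ENNReal {μ : Measure X | MeasurePreserving T μ μ ∧ IsProbabilityMeasure μ}
      ((↑) '' {μ : ProbabilityMeasure X | MeasurePreserving T (μ : Measure X) μ ∧
        M ≤ codeEntropy T ε (μ : Measure X)}) := by
  refine ⟨image_subset_iff.2 fun μ hμ => ⟨hμ.1, inferInstance⟩, ?_⟩
  rintro ν₁ ⟨inv₁, prob₁⟩ ν₂ ⟨inv₂, prob₂⟩ _ ⟨μ, ⟨-, hμ⟩, rfl⟩ ⟨a, b, ha, -, hab, μ_eq⟩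
  refine ⟨⟨ν₁, prob₁⟩, ⟨inv₁, ?_⟩, rfl⟩
  have ha_top : a ≠ ⊤ := ne_top_of_le_ne_top ENNReal.one_ne_top (hab ▸ le_self_add)
  have hb_top : b ≠ ⊤ := ne_top_of_le_ne_top ENNReal.one_ne_top (hab ▸ le_add_self)
  have := ν₁.smul_finite ha_top
  have := ν₂.smul_finite hb_top
  have a_pos := ENNReal.toReal_pos ha.ne' ha_top
  have hab_real : a.toReal + b.toReal = 1 := by
    rw [← ENNReal.toReal_add ha_top hb_top, hab, ENNReal.toReal_one]
  have convex := codeEntropy_add_le hT hε (inv₁.smul_measure a) (inv₂.smul_measure b)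
  rw [μ_eq, codeEntropy_smul, codeEntropy_smul] at convex
  have hν₂ : b.toReal * codeEntropy T ε ν₂ ≤ b.toReal * M :=
    mul_le_mul_of_nonneg_left (hM ⟨ν₂, prob₂⟩ inv₂) ENNReal.toReal_nonneg
  refine le_of_mul_le_mul_left (a := a.toReal) ?_ a_pos
  rw [ProbabilityMeasure.coe_mk]
  linear_combination convex + hμ + hν₂ + M * hab_real

theorem exists_ergodic_sepEnt_le_codeEntropy [Nonempty X] (hT : Continuous T) (hε : 0 < ε) :
    ∃ μ ∈ ergodicMeasures T, sepEnt T univ ε ≤ codeEntropy T ε μ := by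
  let I := {μ : ProbabilityMeasure X | MeasurePreserving T (μ : Measure X) μ}
  have compact_I : IsCompact I := (isClosed_setOf_measurePreserving hT).isCompact
  have nonempty_I : I.Nonempty := by
    obtain ⟨μ, hμ, -⟩ := exists_measurePreserving_le_codeEntropy (s := -1) hT hε
      (lt_of_lt_of_le (by exact_mod_cast neg_one_lt_zero) (sepEnt_nonneg T univ ε))
    exact ⟨μ, hμ⟩
  obtain ⟨μ₀, hμ₀, max⟩ := (upperSemicontinuous_codeEntropy (T := T) (ε := ε)
    |>.upperSemicontinuousOn I).exists_isMaxOn nonempty_I compact_I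
  have sepEnt_le : sepEnt T univ ε ≤ codeEntropy T ε (μ₀ : Measure X) := by
    refine EReal.ge_of_forall_gt_iff_ge.1 fun s hs => ?_
    obtain ⟨μ, hμ, hsμ⟩ := exists_measurePreserving_le_codeEntropy hT hε hs
    exact EReal.coe_le_coe_iff.2 (hsμ.trans (max hμ))
  have compact_max : IsCompact (I ∩ {μ : ProbabilityMeasure X |
      codeEntropy T ε (μ₀ : Measure X) ≤ codeEntropy T ε (μ : Measure X)}) :=
    compact_I.inter_right (upperSemicontinuous_codeEntropy.isClosed_preimage _)
  obtain ⟨ν, hν⟩ := nonempty_extremePoints_coe_image compact_max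
    ⟨μ₀, hμ₀, le_refl (codeEntropy T ε (μ₀ : Measure X))⟩
  have ergodic : Ergodic T ν := .of_mem_extremePoints
    ((isExtreme_codeEntropy_eq hT hε fun _ hμ => max hμ).extremePoints_subset_extremePoints hν)
  obtain ⟨μ, ⟨-, hμ⟩, rfl⟩ := hν.1
  exact ⟨μ, ⟨inferInstance, ergodic⟩, sepEnt_le.trans (EReal.coe_le_coe_iff.2 hμ)⟩

end Maximizer

end ErgodicMaximizer

section VariableLength

lemma add_sum_range_sub_le {f : ℕ → ℝ} (hf : ∀ k, 0 ≤ f k) {j n : ℕ} (hj : 0 < j) (hjn : j ≤ n) :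
    f 0 + ∑ k ∈ Finset.range (n - j), f (k + j) ≤ ∑ k ∈ Finset.range n, f k := by
  obtain ⟨m, rfl⟩ := Nat.exists_eq_add_of_le hjn
  simp only [Nat.add_sub_cancel_left, Finset.sum_range_add, add_comm _ j]
  gcongr
  exact Finset.single_le_sum (fun k _ => hf k) (Finset.mem_range.2 hj)

namespace OrbitCode

lemma exists_len_ge_cost_le [PseudoMetricSpace X] {T : X → X} {ε t : ℝ} {c : OrbitCode T ε}
    {ℓ : ℕ} {e : X → ℝ} (hT : Continuous T) (len_pos : ∀ i, 0 < c.len i)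
    (len_le : ∀ i, c.len i ≤ ℓ) (ht : 0 ≤ t) (he : ∀ x, 0 ≤ e x)
    (hcost : ∀ x, c.cost x ≤ t * c.meanLen x + e x) (N : ℕ) :
    ∃ d : OrbitCode T ε, (∀ i, N ≤ d.len i + ℓ) ∧
      ∀ x, d.cost x ≤ N * t + ∑ k ∈ Finset.range N, e (T^[k] x) := by
  induction N using Nat.strong_induction_on with | _ N ih
  rcases le_or_gt N ℓ with hN | hN
  · refine ⟨unit, fun _ => hN.trans (Nat.le_add_left _ _), fun x => ?_⟩
    rw [cost_unit]
    exact add_nonneg (by positivity) (Finset.sum_nonneg fun _ _ => he _)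
  have len_le_N (i : c.Word) : c.len i ≤ N := (len_le i).trans hN.le
  choose d len_d cost_d using fun i => ih (N - c.len i)
    (Nat.sub_lt_self (len_pos i) (len_le_N i))
  refine ⟨c.extend hT d, fun p => ?_, fun x => ?_⟩
  · have := len_d p.1 p.2
    have : (c.extend hT d).len p = c.len p.1 + (d p.1).len p.2 := rfl
    omega
  have cost_tail (i : c.Word) : (d i).cost (T^[c.len i] x) ≤
      (N * t + ∑ k ∈ Finset.range N, e (T^[k] x) - e x) + -t * c.len i := by
    have sum_le : e x + ∑ k ∈ Finset.range (N - c.len i), e (T^[k] (T^[c.len i] x)) ≤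
        ∑ k ∈ Finset.range N, e (T^[k] x) := by
      simp only [← Function.iterate_add_apply]
      exact add_sum_range_sub_le (fun k => he (T^[k] x)) (len_pos i) (len_le_N i)
    have := cost_d i (T^[c.len i] x)
    rw [Nat.cast_sub (len_le_N i)] at this
    linarith
  calc (c.extend hT d).cost x
      = c.cost x + c.average (fun i => (d i).cost (T^[c.len i] x)) x := by
        rw [cost_extend, average_add]; rfl
    _ ≤ (t * c.meanLen x + e x) +
        c.average (fun i => (N * t + ∑ k ∈ Finset.range N, e (T^[k] x) - e x) + -t * c.len i) x :=
        add_le_add (hcost x) (c.average_mono cost_tail x)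
    _ = N * t + ∑ k ∈ Finset.range N, e (T^[k] x) := by
        rw [average_add, average_const, average_const_mul, ← meanLen]
        ring

end OrbitCode

theorem codeEntropy_le_add_integral [PseudoMetricSpace X] [CompactSpace X] [MeasurableSpace X]
    [BorelSpace X] {T : X → X} {ε t : ℝ} {c : OrbitCode T ε} {e : X → ℝ} {μ : Measure X}
    [IsProbabilityMeasure μ] (hT : Continuous T) (hμ : MeasurePreserving T μ μ)
    (len_pos : ∀ i, 0 < c.len i) (ht : 0 ≤ t) (he : ∀ x, 0 ≤ e x) (he_int : Integrable e μ)
    (hcost : ∀ x, c.cost x ≤ t * c.meanLen x + e x) :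
    codeEntropy T ε μ ≤ t + ∫ x, e x ∂μ := by
  let ℓ := Finset.univ.sup c.len
  have bound (N : ℕ) : N * codeEntropy T ε μ ≤ (N + ℓ : ℕ) * (t + ∫ x, e x ∂μ) := by
    obtain ⟨d, len_d, cost_d⟩ := OrbitCode.exists_len_ge_cost_le hT len_pos
      (fun i => Finset.le_sup (Finset.mem_univ i)) ht he hcost (N + ℓ)
    have integrable (k : ℕ) : Integrable (fun x => e (T^[k] x)) μ :=
      (hμ.iterate k).integrable_comp_of_integrable he_int
    have integrable_sum := integrable_finsetSum (Finset.range (N + ℓ)) fun k _ => integrable k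
    calc N * codeEntropy T ε μ
        ≤ ∫ x, d.cost x ∂μ := mul_codeEntropy_le μ d fun i => Nat.le_of_add_le_add_right (len_d i)
      _ ≤ ∫ x, ((N + ℓ : ℕ) * t + ∑ k ∈ Finset.range (N + ℓ), e (T^[k] x)) ∂μ :=
          integral_mono (d.integrable_cost μ) ((integrable_const _).add integrable_sum) cost_d
      _ = (N + ℓ : ℕ) * (t + ∫ x, e x ∂μ) := by
          rw [integral_add (integrable_const _) integrable_sum,
            integral_finsetSum _ fun k _ => integrable k]
          simp only [integral_comp_iterate hμ he_int.aestronglyMeasurable, integral_const,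
            probReal_univ, one_smul, Finset.sum_const, Finset.card_range, nsmul_eq_mul]
          ring
  by_contra! h
  obtain ⟨N, hN⟩ := exists_nat_gt (ℓ * (t + ∫ x, e x ∂μ) / (codeEntropy T ε μ - (t + ∫ x, e x ∂μ)))
  have := bound N
  rw [div_lt_iff₀ (sub_pos.2 h)] at hN
  push_cast at this
  linarith

namespace OrbitCode

section OfTiles

variable [PseudoMetricSpace X] {T : X → X} {ε t : ℝ} {ι : Type} [Fintype ι] {len : ι → ℕ}

/-- The code with one word for each of finitely many tiles, of weight `exp (-len i * t)`, and an
additional word `none` of length `0` and weight `1 / 2`, for the points that are not tiled. -/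
noncomputable def ofTiles (f : PartitionOfUnity (Option ι) X)
    (isTile : ∀ i, IsTile T ε (len i) (Function.support (f (some i))))
    (sum_exp : ∑ i, Real.exp (-(len i * t)) ≤ 1 / 2) : OrbitCode T ε :=
  ofPartition f (fun o => o.elim (1 / 2) fun i => Real.exp (-(len i * t))) (fun o => o.elim 0 len)
    (fun o => by cases o <;> simp [Real.exp_pos])
    (by
      simp only [Fintype.sum_option, Option.elim]
      linarith)
    (fun o => by
      cases o with
      | none => exact fun _ _ _ _ _ hk => absurd hk (Nat.not_lt_zero _)
      | some i => exact isTile i)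

/-- The code `ofTiles`, continued with `b` at the points that are not tiled. -/
noncomputable def ofTilesOr (hT : Continuous T) (f : PartitionOfUnity (Option ι) X)
    (isTile : ∀ i, IsTile T ε (len i) (Function.support (f (some i))))
    (sum_exp : ∑ i, Real.exp (-(len i * t)) ≤ 1 / 2) (b : OrbitCode T ε) : OrbitCode T ε :=
  (ofTiles f isTile sum_exp).extend hT fun o : Option ι => o.elim b fun _ => unit

variable {hT : Continuous T} {f : PartitionOfUnity (Option ι) X}
  {isTile : ∀ i, IsTile T ε (len i) (Function.support (f (some i)))}
  {sum_exp : ∑ i, Real.exp (-(len i * t)) ≤ 1 / 2} {b : OrbitCode T ε}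

lemma len_ofTilesOr_pos (len_pos : ∀ i, 0 < len i) (hb : ∀ i, 0 < b.len i) :
    ∀ p, 0 < (ofTilesOr hT f isTile sum_exp b).len p
  | ⟨none, j⟩ => Nat.add_pos_right 0 (hb j)
  | ⟨some i, _⟩ => Nat.add_pos_left (len_pos i) 0

lemma cost_ofTilesOr (x : X) :
    (ofTilesOr hT f isTile sum_exp b).cost x =
      f none x * (Real.log 2 + b.cost x) + t * ∑ i, f (some i) x * len i := by
  refine (cost_extend _ _ _).trans ((Fintype.sum_option _).trans ?_)
  simp [ofTiles, ofPartition, Finset.mul_sum, mul_comm _ t, mul_left_comm]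

lemma meanLen_ofTilesOr (x : X) :
    (ofTilesOr hT f isTile sum_exp b).meanLen x =
      f none x * b.meanLen x + ∑ i, f (some i) x * len i := by
  have meanLen_unit (y : X) : (unit : OrbitCode T ε).meanLen y = 0 := by
    simp only [meanLen, unit, Nat.cast_zero, average_const]
  refine (meanLen_extend _ _ _).trans ((Fintype.sum_option _).trans ?_)
  simp [ofTiles, ofPartition, meanLen_unit]

end OfTiles

lemma exists_cost_le_of_isTile_cover [PseudoMetricSpace X] {T : X → X} {ε t L : ℝ}
    (hT : Continuous T) {b : OrbitCode T ε} (hb : ∀ i, b.len i = 1) (hbL : ∀ x, b.cost x = L)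
    (ht : 0 ≤ t) {ι : Type} [Fintype ι] {O : ι → Set X} {len : ι → ℕ} (hO : ∀ i, IsOpen (O i))
    (isTile : ∀ i, IsTile T ε (len i) (O i)) (len_pos : ∀ i, 0 < len i)
    (sum_exp : ∑ i, Real.exp (-(len i * t)) ≤ 1 / 2) {C : Set X} (hC : IsClosed C)
    (hCO : C ⊆ ⋃ i, O i) :
    ∃ (c : OrbitCode T ε) (χ : C(X, ℝ)), (∀ i, 0 < c.len i) ∧ (∀ x, 0 ≤ χ x) ∧ (∀ x, χ x ≤ 1) ∧
      (∀ x ∈ C, χ x = 0) ∧ ∀ x, c.cost x ≤ t * c.meanLen x + (Real.log 2 + L) * χ x := by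
  let U (o : Option ι) : Set X := o.elim Cᶜ O
  have U_open (o : Option ι) : IsOpen (U o) := by
    cases o with
    | none => exact hC.isOpen_compl
    | some i => exact hO i
  have U_cover : univ ⊆ ⋃ o, U o := by
    rw [iUnion_option]
    exact fun x _ => (em (x ∈ C)).elim (fun hx => .inr (hCO hx)) .inl
  obtain ⟨f, hf⟩ := PartitionOfUnity.exists_isSubordinate isClosed_univ U U_open U_cover
  have support_subset (o : Option ι) : Function.support (f o) ⊆ U o :=
    (subset_tsupport _).trans (hf o)
  refine ⟨ofTilesOr hT f (fun i => (isTile i).subset (support_subset (some i))) sum_exp b, f none,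
    len_ofTilesOr_pos len_pos fun i => (hb i).symm ▸ one_pos, f.nonneg none, f.le_one none,
    fun x hx => Function.notMem_support.1 fun h => support_subset none h hx, fun x => ?_⟩
  have meanLen_b : b.meanLen x = 1 := by
    simp only [meanLen, hb, Nat.cast_one, average_const]
  rw [cost_ofTilesOr, meanLen_ofTilesOr, hbL, meanLen_b]
  linarith [mul_nonneg ht (f.nonneg none x)]

end OrbitCode

theorem codeEntropy_le_of_isTile_cover [PseudoMetricSpace X] [CompactSpace X] [MeasurableSpace X]
    [BorelSpace X] {T : X → X} {ε t L : ℝ} {μ : Measure X} [IsProbabilityMeasure μ]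
    (hT : Continuous T) (hμ : MeasurePreserving T μ μ) {b : OrbitCode T ε}
    (hb : ∀ i, b.len i = 1) (hbL : ∀ x, b.cost x = L) (ht : 0 ≤ t) {ι : Type} [Fintype ι]
    {O : ι → Set X} {len : ι → ℕ} (hO : ∀ i, IsOpen (O i))
    (isTile : ∀ i, IsTile T ε (len i) (O i)) (len_pos : ∀ i, 0 < len i)
    (sum_exp : ∑ i, Real.exp (-(len i * t)) ≤ 1 / 2) {C : Set X} (hC : IsClosed C)
    (hCO : C ⊆ ⋃ i, O i) :
    codeEntropy T ε μ ≤ t + (Real.log 2 + L) * μ.real Cᶜ := by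
  obtain ⟨c, χ, c_len_pos, χ_nonneg, χ_le_one, χ_eq_zero, hcost⟩ :=
    OrbitCode.exists_cost_le_of_isTile_cover hT hb hbL ht hO isTile len_pos sum_exp hC hCO
  have : Nonempty X := nonempty_of_isProbabilityMeasure μ
  have cost_nonneg : 0 ≤ Real.log 2 + L := by
    inhabit X
    have := hbL default ▸ b.cost_nonneg default
    positivity
  have χ_integrable : Integrable χ μ :=
    χ.continuous.integrable_of_hasCompactSupport (.of_compactSpace _)
  have integral_χ : ∫ x, χ x ∂μ ≤ μ.real Cᶜ := by
    rw [← integral_indicator_one hC.measurableSet.compl]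
    refine integral_mono χ_integrable
      ((integrable_const 1).indicator hC.measurableSet.compl) fun x => ?_
    by_cases hx : x ∈ C
    · simp [hx, χ_eq_zero]
    · simp [hx, χ_le_one]
  calc codeEntropy T ε μ
      ≤ t + ∫ x, (Real.log 2 + L) * χ x ∂μ :=
        codeEntropy_le_add_integral hT hμ c_len_pos ht
          (fun x => mul_nonneg cost_nonneg (χ_nonneg x)) (χ_integrable.const_mul _) hcost
    _ ≤ t + (Real.log 2 + L) * μ.real Cᶜ := by
        rw [integral_const_mul]
        gcongr

end VariableLength

section Recurrence

variable [MeasurableSpace X] {μ : Measure X}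

lemma le_measure_limsup_of_frequently_le [IsFiniteMeasure μ] {U : ℕ → Set X}
    (hU : ∀ n, MeasurableSet (U n)) {δ : ENNReal} (h : ∃ᶠ n in atTop, δ ≤ μ (U n)) :
    δ ≤ μ (limsup U atTop) := by
  have antitone : Antitone fun k => ⋃ n ≥ k, U n := fun k l hkl =>
    biUnion_subset_biUnion_left fun n hn => hkl.trans hn
  rw [limsup_eq_iInf_iSup_of_nat]
  simp only [iInf_eq_iInter, iSup_eq_iUnion]
  rw [antitone.measure_iInter (fun k => (MeasurableSet.biUnion (to_countable _)
    fun n _ => hU n).nullMeasurableSet) ⟨0, measure_ne_top _ _⟩]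
  refine le_iInf fun k => ?_
  obtain ⟨n, hkn, hn⟩ := frequently_atTop.1 h k
  exact hn.trans (measure_mono (subset_biUnion_of_mem (u := U) hkn))

variable [IsProbabilityMeasure μ] {T : X → X} {r : ENNReal}

lemma measure_iUnion_preimage_iterate_eq_one (hμ : Ergodic T μ) {A : Set X}
    (hA : MeasurableSet A) (hA₀ : μ A ≠ 0) : μ (⋃ m, T^[m] ⁻¹' A) = 1 := by
  have hD : MeasurableSet (⋃ m, T^[m] ⁻¹' A) :=
    .iUnion fun m => hμ.measurable.iterate m hA
  have preimage_subset : T ⁻¹' (⋃ m, T^[m] ⁻¹' A) ⊆ ⋃ m, T^[m] ⁻¹' A := by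
    simp only [preimage_iUnion, ← preimage_comp, ← Function.iterate_succ]
    exact iUnion_subset fun m => subset_iUnion (fun m => T^[m] ⁻¹' A) (m + 1)
  rcases hμ.ae_empty_or_univ_of_preimage_ae_le hD.nullMeasurableSet
    (.of_forall preimage_subset) with h | h
  · exact absurd (measure_mono_null (subset_iUnion (fun m => T^[m] ⁻¹' A) 0)
      ((measure_congr h).trans measure_empty)) hA₀
  · rw [measure_congr h, measure_univ]

lemma exists_lt_measure_accumulate_preimage (hμ : Ergodic T μ) {U : ℕ → Set X}
    (hU : ∀ n, MeasurableSet (U n)) {δ : ENNReal} (hδ : δ ≠ 0)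
    (h : ∃ᶠ n in atTop, δ ≤ μ (U n)) (hr : r < 1) :
    ∃ M : ℕ, ∀ N : ℕ, ∃ K : ℕ,
      r < μ (⋃ n ∈ Finset.Ico N K, accumulate (fun m => T^[m] ⁻¹' U n) M) := by
  have measure_orbit := measure_iUnion_preimage_iterate_eq_one hμ
    (MeasurableSet.measurableSet_limsup hU)
    (ne_bot_of_le_ne_bot hδ (le_measure_limsup_of_frequently_le hU h))
  rw [← measure_orbit, measure_iUnion_eq_iSup_accumulate] at hr
  obtain ⟨M, hM⟩ := lt_iSup_iff.1 hr
  refine ⟨M, fun N => ?_⟩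
  have monotone : Monotone fun K =>
      ⋃ n ∈ Finset.Ico N K, accumulate (fun m => T^[m] ⁻¹' U n) M := fun K L hKL =>
    biUnion_subset_biUnion_left (Finset.Ico_subset_Ico_right hKL)
  refine lt_iSup_iff.1 ((hM.trans_le (measure_mono fun x hx => ?_)).trans_eq
    monotone.measure_iUnion)
  obtain ⟨m, hm, hx⟩ := mem_accumulate.1 hx
  obtain ⟨n, hn, hxn⟩ := frequently_atTop.1 (mem_limsup_iff_frequently_mem.1 hx) N
  simp only [mem_iUnion, Finset.mem_Ico]
  exact ⟨n + 1, n, ⟨hn, n.lt_succ_self⟩, mem_accumulate.2 ⟨m, hm, hxn⟩⟩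

end Recurrence

lemma codeEntropy_le_of_lt_measure_biUnion [PseudoMetricSpace X] [CompactSpace X]
    [MeasurableSpace X] [BorelSpace X] {T : X → X} {ε t : ℝ} {μ : Measure X}
    [IsProbabilityMeasure μ] (hT : Continuous T) (hμ : MeasurePreserving T μ μ)
    {b : OrbitCode T ε} {L : ℝ} (hb : ∀ i, b.len i = 1) (hbL : ∀ x, b.cost x = L) (hL : 0 ≤ L)
    (ht : 0 ≤ t) {J : Finset ℕ} {G : ℕ → Finset (Set X)} (J_pos : ∀ n ∈ J, 0 < n)
    (hG : ∀ n, ∀ O ∈ G n, IsOpen O ∧ IsTile T ε n O)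
    (sum_exp : ∑ n ∈ J, (G n).card * Real.exp (-(n * t)) ≤ 1 / 2) {η : ℝ}
    (hη : ENNReal.ofReal (1 - η) < μ (⋃ n ∈ J, ⋃₀ (G n : Set (Set X)))) :
    codeEntropy T ε μ ≤ t + (Real.log 2 + L) * η := by
  obtain ⟨C, hCO, hC, hηC⟩ := IsOpen.exists_lt_isClosed
    (isOpen_biUnion fun n _ => isOpen_sUnion fun O hO => (hG n O hO).1) hη
  have compl_le : μ.real Cᶜ ≤ η := by
    have : 1 - η ≤ μ.real C := (ENNReal.ofReal_le_iff_le_toReal (measure_ne_top μ C)).1 hηC.le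
    rw [probReal_compl_eq_one_sub hC.measurableSet]
    linarith
  let P : Finset (Σ _ : ℕ, Set X) := J.sigma G
  let e : Fin P.card ≃ P := P.equivFin.symm
  have mem (i : Fin P.card) := Finset.mem_sigma.1 (e i).2
  have sum_eq : ∑ i, Real.exp (-((e i).1.1 * t)) = ∑ n ∈ J, (G n).card * Real.exp (-(n * t)) := by
    rw [e.sum_comp fun p : P => Real.exp (-(p.1.1 * t)),
      Finset.sum_coe_sort P fun p => Real.exp (-(p.1 * t)), Finset.sum_sigma]
    simp only [Finset.sum_const, nsmul_eq_mul]
  have subset_iUnion : C ⊆ ⋃ i, (e i).1.2 := by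
    rw [e.surjective.iUnion_comp fun p : P => p.1.2]
    intro x hx
    obtain ⟨n, hn, O, hO, hxO⟩ := mem_iUnion₂.1 (hCO hx)
    exact mem_iUnion.2 ⟨⟨⟨n, O⟩, Finset.mem_sigma.2 ⟨hn, hO⟩⟩, hxO⟩
  calc codeEntropy T ε μ
      ≤ t + (Real.log 2 + L) * μ.real Cᶜ :=
        codeEntropy_le_of_isTile_cover hT hμ hb hbL ht (fun i => (hG _ _ (mem i).2).1)
          (fun i => (hG _ _ (mem i).2).2) (fun i => J_pos _ (mem i).1) (sum_eq.trans_le sum_exp)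
          hC subset_iUnion
    _ ≤ t + (Real.log 2 + L) * η := by
        have := Real.log_nonneg one_le_two
        gcongr

section TileCover

variable [MetricSpace X] [CompactSpace X] {T : X → X} {ε : ℝ}

lemma exists_isTile_cover_accumulate_preimage (hT : Continuous T) (hε : 0 < ε) (M : ℕ) :
    ∃ B : ℕ, ∀ (n : ℕ) (F : Finset (Set X)), (∀ O ∈ F, IsOpen O ∧ IsTile T ε n O) →
      ∃ G : Finset (Set X), (∀ O ∈ G, IsOpen O ∧ IsTile T ε n O) ∧ G.card ≤ B * F.card ∧
        accumulate (fun m => T^[m] ⁻¹' ⋃₀ (F : Set (Set X))) M ⊆ ⋃₀ (G : Set (Set X)) := by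
  classical
  choose V hV V_cover using exists_finset_isTile_cover (T := T) (ε := ε) hT hε
  refine ⟨∑ m ∈ Finset.range (M + 1), (V m).card, fun n F hF => ?_⟩
  refine ⟨(Finset.range (M + 1)).biUnion fun m =>
    Finset.image₂ (fun W O => W ∩ T^[m] ⁻¹' O) (V m) F, fun O hO => ?_, ?_, fun x hx => ?_⟩
  · obtain ⟨m, -, hO⟩ := Finset.mem_biUnion.1 hO
    obtain ⟨W, hW, O', hO', rfl⟩ := Finset.mem_image₂.1 hO
    exact ⟨(hV m W hW).1.inter ((hF O' hO').1.preimage (hT.iterate m)),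
      ((hV m W hW).2.inter_preimage (hF O' hO').2).mono_length (Nat.le_add_left n m)⟩
  · rw [Finset.sum_mul]
    exact Finset.card_biUnion_le.trans (Finset.sum_le_sum fun m _ => Finset.card_image₂_le _ _ _)
  · obtain ⟨m, hm, O, hO, hxO⟩ := mem_accumulate.1 hx
    obtain ⟨W, hW, hxW⟩ := (V_cover m).ge (mem_univ x)
    exact ⟨W ∩ T^[m] ⁻¹' O, Finset.mem_biUnion.2 ⟨m, Finset.mem_range.2 (Nat.lt_succ_of_le hm),
      Finset.mem_image₂_of_mem hW hO⟩, hxW, hxO⟩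

lemma exists_pos_forall_sum_Ico_lt_of_summable {a : ℕ → ℝ} (ha : Summable a) {η : ℝ} (hη : 0 < η) :
    ∃ N > 0, ∀ K, ∑ n ∈ Finset.Ico N K, a n < η := by
  obtain ⟨s, hs⟩ := summable_iff_vanishing_norm.1 ha η hη
  refine ⟨s.sup id + 1, Nat.succ_pos _, fun K => (le_abs_self _).trans_lt (hs _ ?_)⟩
  refine Finset.disjoint_left.2 fun n hn hns => ?_
  have : n ≤ s.sup id := Finset.le_sup (f := id) hns
  have := (Finset.mem_Ico.1 hn).1
  omega

variable [MeasurableSpace X] [BorelSpace X] {μ : Measure X} [IsProbabilityMeasure μ]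
  {s t : ℝ} {F : ℕ → Finset (Set X)} {δ r : ENNReal}

lemma exists_isTile_cover_sum_exp_le (hT : Continuous T) (hε : 0 < ε) (hμ : Ergodic T μ)
    (hF : ∀ n, ∀ O ∈ F n, IsOpen O ∧ IsTile T ε n O)
    (card_le : ∀ n : ℕ, ((F n).card : ℝ) ≤ Real.exp (n * s)) (hδ : δ ≠ 0)
    (h : ∃ᶠ n in atTop, δ ≤ μ (⋃₀ (F n : Set (Set X)))) (hst : s < t) (hr : r < 1) :
    ∃ (J : Finset ℕ) (G : ℕ → Finset (Set X)), (∀ n ∈ J, 0 < n) ∧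
      (∀ n, ∀ O ∈ G n, IsOpen O ∧ IsTile T ε n O) ∧
      ∑ n ∈ J, (G n).card * Real.exp (-(n * t)) ≤ 1 / 2 ∧
      r < μ (⋃ n ∈ J, ⋃₀ (G n : Set (Set X))) := by
  obtain ⟨M, hM⟩ := exists_lt_measure_accumulate_preimage hμ
    (fun n => (isOpen_sUnion fun O hO => (hF n O hO).1).measurableSet) hδ h hr
  obtain ⟨B, hB⟩ := exists_isTile_cover_accumulate_preimage (T := T) hT hε M
  choose G hG card_G subset_G using fun n => hB n (F n) (hF n)
  have summable : Summable fun n : ℕ => B * Real.exp (n * (s - t)) :=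
    (Real.summable_exp_nat_mul_iff.2 (sub_neg.2 hst)).mul_left _
  obtain ⟨N, hN, sum_lt⟩ := exists_pos_forall_sum_Ico_lt_of_summable summable one_half_pos
  obtain ⟨K, hK⟩ := hM N
  refine ⟨Finset.Ico N K, G, fun n hn => hN.trans_le (Finset.mem_Ico.1 hn).1, hG, ?_,
    hK.trans_le (measure_mono (iUnion₂_mono fun n _ => subset_G n))⟩
  refine (Finset.sum_le_sum fun n _ => ?_).trans (sum_lt K).le
  calc ((G n).card : ℝ) * Real.exp (-(n * t))
      ≤ (B * Real.exp (n * s)) * Real.exp (-(n * t)) := by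
        gcongr
        calc ((G n).card : ℝ) ≤ B * (F n).card := mod_cast card_G n
          _ ≤ B * Real.exp (n * s) := by gcongr; exact card_le n
    _ = B * Real.exp (n * (s - t)) := by
        rw [mul_assoc, ← Real.exp_add]
        ring_nf

theorem codeEntropy_le_of_frequently_le_measure_sUnion (hT : Continuous T) (hε : 0 < ε)
    (hμ : Ergodic T μ) (hs : 0 ≤ s) (hF : ∀ n, ∀ O ∈ F n, IsOpen O ∧ IsTile T ε n O)
    (card_le : ∀ n : ℕ, ((F n).card : ℝ) ≤ Real.exp (n * s)) (hδ : δ ≠ 0)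
    (h : ∃ᶠ n in atTop, δ ≤ μ (⋃₀ (F n : Set (Set X)))) :
    codeEntropy T ε μ ≤ s := by
  obtain ⟨b, L, hb, hbL⟩ := OrbitCode.exists_len_eq_cost_eq (T := T) hT hε 1
  have : Nonempty X := nonempty_of_isProbabilityMeasure μ
  have hL : 0 ≤ L := hbL (Classical.arbitrary X) ▸ b.cost_nonneg _
  have bound : ∀ᶠ η in 𝓝[>] (0 : ℝ), codeEntropy T ε μ ≤ s + η + (Real.log 2 + L) * η := by
    filter_upwards [self_mem_nhdsWithin] with η (hη : 0 < η)
    obtain ⟨J, G, J_pos, hG, sum_exp, hJ⟩ := exists_isTile_cover_sum_exp_le hT hε hμ hF card_le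
      hδ h (lt_add_of_pos_right s hη) (ENNReal.ofReal_lt_one.2 (sub_lt_self 1 hη))
    exact codeEntropy_le_of_lt_measure_biUnion hT hμ.toMeasurePreserving hb hbL hL
      (by positivity) J_pos hG sum_exp hJ
  refine ge_of_tendsto (tendsto_nhdsWithin_of_tendsto_nhds ?_) bound
  exact (by fun_prop : Continuous fun η : ℝ => s + η + (Real.log 2 + L) * η).tendsto' 0 s (by simp)

theorem codeEntropy_le_katokEntLower (hT : Continuous T) (hε : 0 < ε) (hμ : Ergodic T μ)
    {δ : ℝ} (hδ : δ ∈ Ioo (0 : ℝ) 1) :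
    (codeEntropy T ε μ : EReal) ≤ katokEntLower T μ (ε / 2) δ := by
  classical
  by_contra! hlt
  obtain ⟨s, hs, hs'⟩ := EReal.lt_iff_exists_real_btwn.1 hlt
  choose E measure_E card_E using exists_card_eq_katokNum μ hT (half_pos hε) hδ.2
  have hfreq : ∃ᶠ n : ℕ in atTop, Real.log (E n).card / n < s := by
    simpa only [card_E, EReal.coe_lt_coe_iff] using
      frequently_lt_of_liminf_lt (by isBoundedDefault) hs
  have hs₀ : 0 ≤ s := by
    obtain ⟨n, hn⟩ := hfreq.exists
    exact (div_nonneg (Real.log_natCast_nonneg _) n.cast_nonneg).trans hn.le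
  let F (n : ℕ) : Finset (Set X) :=
    if ((E n).card : ℝ) ≤ Real.exp (n * s) then (E n).image fun x => dynBall T n x (ε / 2) else ∅
  have hF (n : ℕ) : ∀ O ∈ F n, IsOpen O ∧ IsTile T ε n O := by
    simp only [F]
    split_ifs
    · exact Finset.forall_mem_image.2 fun x _ =>
        ⟨isOpen_dynBall hT n x (half_pos hε), isTile_dynBall T ε n x⟩
    · simp
  have card_F (n : ℕ) : ((F n).card : ℝ) ≤ Real.exp (n * s) := by
    simp only [F]
    split_ifs with hn
    · exact (Nat.cast_le.2 Finset.card_image_le).trans hn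
    · simp [Real.exp_nonneg]
  refine (EReal.coe_lt_coe_iff.1 hs').not_ge <|
    codeEntropy_le_of_frequently_le_measure_sUnion hT hε hμ hs₀ hF card_F
      (ENNReal.ofReal_pos.2 hδ.1).ne' ?_
  refine (hfreq.and_eventually (eventually_gt_atTop 0)).mono fun n ⟨hn, hn₀⟩ => ?_
  have card_pos : (0 : ℝ) < (E n).card := by
    exact_mod_cast card_E n ▸ katokNum_pos μ hT (half_pos hε) hδ.2 n
  have card_le : ((E n).card : ℝ) ≤ Real.exp (n * s) := by
    rw [← Real.log_le_iff_le_exp card_pos, mul_comm]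
    exact ((div_lt_iff₀ (Nat.cast_pos.2 hn₀)).1 hn).le
  simpa [F, card_le] using (measure_E n).le

end TileCover

section Limsup

lemma tendsto_log_one_div_nhdsGT_zero :
    Tendsto (fun ε : ℝ => Real.log (1 / ε)) (𝓝[>] 0) atTop := by
  simp only [one_div]
  exact Real.tendsto_log_atTop.comp tendsto_inv_nhdsGT_zero

variable {c : ℝ}

lemma tendsto_div_const_nhdsGT_zero (hc : 0 < c) :
    Tendsto (fun ε : ℝ => ε / c) (𝓝[>] 0) (𝓝[>] 0) :=
  tendsto_nhdsWithin_of_tendsto_nhds_of_eventually_within _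
    (tendsto_nhdsWithin_of_tendsto_nhds ((continuous_id.div_const c).tendsto' 0 0 (zero_div c)))
    (eventually_nhdsWithin_of_forall fun _ hε => div_pos hε hc)

lemma tendsto_log_one_div_div_const_div_log (hc : 0 < c) :
    Tendsto (fun ε : ℝ => Real.log (1 / (ε / c)) / Real.log (1 / ε)) (𝓝[>] 0) (𝓝 1) := by
  have : Tendsto (fun ε : ℝ => Real.log c / Real.log (1 / ε) + 1) (𝓝[>] 0) (𝓝 1) := by
    simpa using (tendsto_log_one_div_nhdsGT_zero.const_div_atTop (Real.log c)).add_const 1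
  refine this.congr' ?_
  filter_upwards [self_mem_nhdsWithin, tendsto_log_one_div_nhdsGT_zero.eventually_gt_atTop 0]
    with ε (hε : 0 < ε) hlog
  rw [one_div_div, div_eq_mul_one_div c, Real.log_mul hc.ne' (one_div_pos.2 hε).ne', add_div,
    div_self hlog.ne']

theorem limsup_div_log_le_of_le_comp_div_const (hc : 0 < c) {A B : ℝ → EReal}
    (h : ∀ ε > 0, A ε ≤ B (ε / c)) :
    limsup (fun ε => A ε / (Real.log (1 / ε) : ℝ)) (𝓝[>] 0) ≤
      limsup (fun ε => B ε / (Real.log (1 / ε) : ℝ)) (𝓝[>] 0) := by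
  refine EReal.le_of_forall_lt_iff_le.1 fun b hb => ?_
  have A_le : ∀ᶠ ε in 𝓝[>] (0 : ℝ), A ε / (Real.log (1 / ε) : ℝ) ≤
      (Real.log (1 / (ε / c)) / Real.log (1 / ε) * b : ℝ) := by
    filter_upwards [self_mem_nhdsWithin,
      (tendsto_div_const_nhdsGT_zero hc).eventually (eventually_lt_of_limsup_lt hb),
      tendsto_log_one_div_nhdsGT_zero.eventually_gt_atTop 0,
      (tendsto_div_const_nhdsGT_zero hc).eventually
        (tendsto_log_one_div_nhdsGT_zero.eventually_gt_atTop 0)] with ε hε hB hlog hlog'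
    rw [EReal.div_le_iff_le_mul (by exact_mod_cast hlog) (EReal.coe_ne_top _)]
    calc A ε ≤ B (ε / c) := h ε hε
      _ ≤ (Real.log (1 / (ε / c)) : ℝ) * (b : EReal) :=
        (EReal.div_le_iff_le_mul (by exact_mod_cast hlog') (EReal.coe_ne_top _)).1 hB.le
      _ = (Real.log (1 / ε) : ℝ) * (Real.log (1 / (ε / c)) / Real.log (1 / ε) * b : ℝ) := by
        norm_cast
        field_simp
  have bound_tendsto : Tendsto (fun ε : ℝ =>
      ((Real.log (1 / (ε / c)) / Real.log (1 / ε) * b : ℝ) : EReal)) (𝓝[>] 0) (𝓝 b) := by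
    refine (continuous_coe_real_ereal.tendsto b).comp ?_
    simpa using (tendsto_log_one_div_div_const_div_log hc).mul_const b
  exact (limsup_le_limsup A_le).trans bound_tendsto.limsup_eq.le

end Limsup

theorem upper_mdim_eq_limsup_lowerKatok_general [MetricSpace X] [CompactSpace X] [Nonempty X]
    [MeasurableSpace X] [BorelSpace X] {T : X → X} (hT : Continuous T) {δ : ℝ}
    (hδ : δ ∈ Ioo (0 : ℝ) 1) :
    mdimUpper T = limsup (fun ε : ℝ =>
      (⨆ μ ∈ ergodicMeasures T, katokEntLower T μ ε δ) / (Real.log (1 / ε) : ℝ)) (𝓝[>] 0) := by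
  apply le_antisymm
  · refine limsup_div_log_le_of_le_comp_div_const two_pos
      (B := fun ε => ⨆ μ ∈ ergodicMeasures T, katokEntLower T μ ε δ) fun ε hε => ?_
    obtain ⟨μ, hμ, le_codeEntropy⟩ := exists_ergodic_sepEnt_le_codeEntropy hT hε
    have := hμ.1
    calc sepEnt T univ ε
        ≤ codeEntropy T ε μ := le_codeEntropy
      _ ≤ katokEntLower T μ (ε / 2) δ := codeEntropy_le_katokEntLower hT hε hμ.2 hδ
      _ ≤ ⨆ μ ∈ ergodicMeasures T, katokEntLower T μ (ε / 2) δ :=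
        le_iSup₂ (f := fun μ _ => katokEntLower T μ (ε / 2) δ) μ hμ
  · refine limsup_div_log_le_of_le_comp_div_const two_pos
      (A := fun ε => ⨆ μ ∈ ergodicMeasures T, katokEntLower T μ ε δ) fun ε hε => ?_
    refine iSup₂_le fun μ hμ => ?_
    have := hμ.1
    exact katokEntLower_le_sepEnt μ hT hε hδ.2

section Theorems

variable [MetricSpace X] [CompactSpace X] [Nonempty X] [MeasurableSpace X] [BorelSpace X]

/-- Variational principle for the upper metric mean dimension in terms of the lower
Katok entropy (Proposition 5.2, first part). -/
theorem upper_mdim_eq_limsup_lowerKatok (T : X → X) (hT : IsHomeomorph T)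
    (δ : ℝ) (hδ : δ ∈ Set.Ioo (0:ℝ) 1) :
    mdimUpper T = limsup (fun ε : ℝ =>
      (⨆ μ ∈ ergodicMeasures T, katokEntLower T μ ε δ)
        / ((Real.log (1 / ε) : ℝ) : EReal)) (𝓝[>] (0:ℝ)) :=
  upper_mdim_eq_limsup_lowerKatok_general hT.continuous hδ

end Theorems
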